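/- Theorem 1.1(i) (uniform-in-time moment bounds for mollified soft potentials). Let N ≥ 2 and s > 2. There exists q₀ > 0 (depending on N, γ, s and the collision kernel) such that the following holds: if f_in ≥ 0 belongs to L¹_{2s}(ℝ^N) ∩ L²_{q₀}(ℝ^N), and f is a solution of the spatially homogeneous Boltzmann equation with collision kernel satisfying (H1)-(H2)-(H3) and initial datum f_in, then there is a finite constant C(s) > 0 such that ‖f(t,·)‖_{L¹_s} ≤ C(s) for all t ≥ 0. -/

import Mathlib

/-!
The proof is a weighted Povzner argument with a moving cut-off. Write `x = 1 + |v|²`, `a = s/2 > 1`,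
`δ = -γ/2 ∈ [0, 1)`. For a weight `ψ` with power-like behaviour (`IsWeight`), conservation of mass
and energy and the Povzner inequality give (`moment_ineq`, `neg_moment_lower`, `evolution`)

  `2 d/dt ∫ f ψ(x) ≤ 2 ∫ f ∂ₜψ(x) - λ ∫ f ψ(x) x^{-δ} + Λ ∫ f ψ(x)/x`.

The coercive term is too weak, for the weight `x^a`, to control `∫ f x^a` itself when `δ > 0`, so a
direct differential inequality yields only growth in time. Fix instead a final time `T` and use

  `ψ_t(x) = x^a (x^δ / (x^δ + θ))²`,  `θ = c (T - t)`  (`cutW`).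

* At `t = T` it is exactly `x^a`, and at `t = 0` it is at most `x^a`.
* Its time derivative is at most `2 c ψ_t(x) x^{-δ}`, so for `c = λ/8` half of the coercive term
  absorbs it.
* Since `δ < 1`, the other half absorbs the error `Λ ψ_t(x)/x` for `x ≥ K`. For `x ≤ K` the error is
  at most `Λ K^{a+2δ} (1+θ)^{-2}`, whose integral over `[0, T]` is at most `Λ K^{a+2δ} / c`,
  independently of `T` (`cut_absorb`, `integral_tail`).

Integrating from `0` to `T` bounds `∫ f(T) x^a` uniformly in `T` (`uniform_moment`). The finiteness
needed to cancel terms comes from a first pass with the truncated weights `min (x^a) (R x)`, which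
gives exponential growth at worst (`moment_growth`).

Two measure-theoretic points underlie this. The collisional change of variables for the
`(N-1)`-dimensional Hausdorff measure on the sphere is obtained from polar coordinates, because
rotation-invariant finite measures on the sphere are proportional (`invariant_unique`). The function
`b` is not assumed measurable, but it can be replaced by a Borel function without changing the
collision operator (`exists_measurable_b`).
-/

open MeasureTheory Real RealInnerProductSpace ENNReal

noncomputable section

/-- Euclidean space `ℝ^N`. -/
abbrev Rn (N : ℕ) := EuclideanSpace ℝ (Fin N)

/-- Surface measure on the unit sphere `S^{N-1} ⊂ ℝ^N`: the `(N-1)`-dimensional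
Hausdorff measure restricted to the sphere. -/
def sphMeas (N : ℕ) : Measure (Rn N) :=
  (μH[(N : ℝ) - 1]).restrict (Metric.sphere (0 : Rn N) 1)

/-- Post-collisional velocity `v' = (v+v_*)/2 + (|v-v_*|/2) σ`. -/
def vP (N : ℕ) (v w σ : Rn N) : Rn N :=
  (2:ℝ)⁻¹ • (v + w) + (‖v - w‖ / 2) • σ

/-- Post-collisional velocity `v'_* = (v+v_*)/2 - (|v-v_*|/2) σ`. -/
def vSP (N : ℕ) (v w σ : Rn N) : Rn N :=
  (2:ℝ)⁻¹ • (v + w) - (‖v - w‖ / 2) • σ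

/-- Cosine of the deviation angle: `cos θ = σ · (v - v_*)/|v - v_*|`. -/
def cosTheta (N : ℕ) (v w σ : Rn N) : ℝ := ⟪σ, v - w⟫ / ‖v - w‖

/-- The Boltzmann collision operator `Q(g,f)` for a kernel `B = Φ(|v-v_*|) b(cos θ)`. -/
def Qop (N : ℕ) (Φ b : ℝ → ℝ) (g f : Rn N → ℝ) (v : Rn N) : ℝ :=
  ∫ w : Rn N, ∫ σ : Rn N,
    Φ ‖v - w‖ * b (cosTheta N v w σ) *
      (g (vSP N v w σ) * f (vP N v w σ) - g w * f v) ∂(sphMeas N)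

/-- Weighted norm `‖f‖_{L¹_s} = ∫ |f(v)| (1+|v|²)^{s/2} dv`, valued in `[0,∞]`. -/
def L1s (N : ℕ) (s : ℝ) (f : Rn N → ℝ) : ℝ≥0∞ :=
  ∫⁻ v : Rn N, ENNReal.ofReal (|f v| * (1 + ‖v‖ ^ 2) ^ (s / 2))

/-- Weighted norm `‖f‖_{L²_s} = (∫ |f(v)|² (1+|v|²)^s dv)^{1/2}`, valued in `[0,∞]`. -/
def L2s (N : ℕ) (s : ℝ) (f : Rn N → ℝ) : ℝ≥0∞ :=
  (∫⁻ v : Rn N, ENNReal.ofReal (|f v| ^ 2 * (1 + ‖v‖ ^ 2) ^ s)) ^ (1/2 : ℝ)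

/-- Assumptions (H1)-(H2)-(H3) on the collision kernel `B = Φ(|v-v_*|) b(cos θ)`. -/
structure KernelOK (N : ℕ) (Φ b : ℝ → ℝ) (γ : ℝ) : Prop where
  gamma_mem : γ ∈ Set.Ioc (-2 : ℝ) 0
  phi_smooth : ContDiff ℝ (⊤ : ℕ∞) Φ
  phi_bounds : ∃ cΦ CΦ : ℝ, 0 < cΦ ∧ 0 < CΦ ∧ ∀ z : Rn N,
    cΦ * (1 + ‖z‖) ^ γ ≤ Φ ‖z‖ ∧ Φ ‖z‖ ≤ CΦ * (1 + ‖z‖) ^ γ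
  phi_deriv_bounds : ∀ p : ℕ, 0 < p → ∃ C : ℝ, ∀ r : ℝ, |iteratedDeriv p Φ r| ≤ C
  b_pos : ∃ b₀ : ℝ, 0 < b₀ ∧ ∀ x : ℝ, b₀ ≤ b x
  b_integrable : ∀ u : Rn N, ‖u‖ = 1 →
    Integrable (fun σ : Rn N => b ⟪u, σ⟫) (sphMeas N)

/-- A solution of the spatially homogeneous Boltzmann equation with initial datum `f_in`:
nonnegative, measurable, in `L¹_2` at each time, satisfying the Duhamel (integrated) form of
the equation, and conserving mass, momentum and energy. -/
structure IsSolution (N : ℕ) (Φ b : ℝ → ℝ) (f : ℝ → Rn N → ℝ) (fIn : Rn N → ℝ) : Prop where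
  nonneg : ∀ t v, 0 ≤ f t v
  meas : Measurable (Function.uncurry f)
  mem_L1_2 : ∀ t : ℝ, 0 ≤ t → L1s N 2 (f t) < ⊤
  eqn : ∀ t : ℝ, 0 ≤ t → ∀ v : Rn N,
    f t v = fIn v + ∫ τ in Set.Ioc (0:ℝ) t, Qop N Φ b (f τ) (f τ) v
  mass : ∀ t : ℝ, 0 ≤ t → ∫ v : Rn N, f t v = ∫ v : Rn N, fIn v
  momentum : ∀ t : ℝ, 0 ≤ t → ∀ i : Fin N,
    ∫ v : Rn N, f t v * v i = ∫ v : Rn N, fIn v * v i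
  energy : ∀ t : ℝ, 0 ≤ t →
    ∫ v : Rn N, f t v * ‖v‖ ^ 2 = ∫ v : Rn N, fIn v * ‖v‖ ^ 2

open scoped Pointwise

/-! ### Rotation-invariant measures on the sphere -/

lemma sph_map_isometry {N : ℕ} (L : Rn N ≃ₗᵢ[ℝ] Rn N) : (sphMeas N).map L = sphMeas N := by
  unfold sphMeas
  have h := L.toIsometryEquiv.map_hausdorffMeasure ((N : ℝ) - 1)
  have hpre : Metric.sphere (0 : Rn N) 1 = L ⁻¹' Metric.sphere (0 : Rn N) 1 := by
    ext x; simp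
  conv_lhs => rw [hpre]
  rw [← Measure.restrict_map L.continuous.measurable Metric.isClosed_sphere.measurableSet]
  congr 1

lemma exists_isometry {N : ℕ} {u u' : Rn N} (h : ‖u‖ = ‖u'‖) :
    ∃ L : Rn N ≃ₗᵢ[ℝ] Rn N, L u = u' :=
  ⟨(ℝ ∙ (u - u'))ᗮ.reflection, Submodule.reflection_sub h⟩

lemma measure_ball_eq {N : ℕ} {μ : Measure (Rn N)}
    (hμ : ∀ L : Rn N ≃ₗᵢ[ℝ] Rn N, μ.map L = μ) {x y : Rn N} (h : ‖x‖ = ‖y‖) (r : ℝ) :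
    μ (Metric.ball x r) = μ (Metric.ball y r) := by
  obtain ⟨L, rfl⟩ := exists_isometry h
  conv_rhs => rw [← hμ L]
  rw [Measure.map_apply L.continuous.measurable Metric.isOpen_ball.measurableSet]
  congr 1
  ext z
  simp [Metric.mem_ball]

lemma ball_pos_of_invariant {N : ℕ} {μ : Measure (Rn N)}
    (hμs : μ (Metric.sphere 0 1)ᶜ = 0) (hμ0 : μ ≠ 0)
    (hμ : ∀ L : Rn N ≃ₗᵢ[ℝ] Rn N, μ.map L = μ) {x : Rn N} (hx : ‖x‖ = 1) {r : ℝ} (hr : 0 < r) :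
    μ (Metric.ball x r) ≠ 0 := by
  intro h0
  apply hμ0
  rw [← Measure.measure_univ_eq_zero, ← Set.union_compl_self (Metric.sphere (0 : Rn N) 1)]
  refine measure_union_null ?_ hμs
  refine measure_null_of_locally_null _ fun y hy => ?_
  refine ⟨Metric.ball y r, mem_nhdsWithin_of_mem_nhds (Metric.ball_mem_nhds y hr), ?_⟩
  rw [← measure_ball_eq hμ (x := x) (by rw [hx]; simpa using hy.symm) r, h0]

/-- Two rotation-invariant finite measures on the unit sphere are proportional. All balls of radius
`r` centred on the sphere have the same mass for each of the two measures; evaluating the integral of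
`g(x)` over the pairs `(x, y)` with `dist x y < r` by Fubini in both orders, and letting `r → 0` by
uniform continuity of `g`, compares the integrals of `g` against the two measures. -/
lemma invariant_unique {N : ℕ} (S μ : Measure (Rn N)) [IsFiniteMeasure S] [IsFiniteMeasure μ]
    (hSs : S (Metric.sphere 0 1)ᶜ = 0) (hμs : μ (Metric.sphere 0 1)ᶜ = 0)
    (hS : ∀ L : Rn N ≃ₗᵢ[ℝ] Rn N, S.map L = S) (hμ : ∀ L : Rn N ≃ₗᵢ[ℝ] Rn N, μ.map L = μ)
    (hμ0 : μ ≠ 0) : μ Set.univ • S = S Set.univ • μ := by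
  have hne : (Metric.sphere (0 : Rn N) 1).Nonempty := by
    by_contra h
    rw [Set.not_nonempty_iff_eq_empty] at h
    rw [h, Set.compl_empty] at hμs
    exact hμ0 (Measure.measure_univ_eq_zero.1 hμs)
  obtain ⟨x₀, hx₀⟩ := hne
  have hx₀' : ‖x₀‖ = 1 := by simpa using hx₀
  have hμu : 0 < μ.real Set.univ := by
    simp only [Measure.real]
    exact ENNReal.toReal_pos (by simpa using hμ0) (measure_ne_top _ _)
  have : IsFiniteMeasure (μ Set.univ • S) := Measure.smul_finite S (measure_ne_top _ _)
  have : IsFiniteMeasure (S Set.univ • μ) := Measure.smul_finite μ (measure_ne_top _ _)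
  apply ext_of_forall_integral_eq_of_IsFiniteMeasure
  intro g
  rw [integral_smul_measure, integral_smul_measure]
  change μ.real Set.univ • _ = S.real Set.univ • _
  simp only [smul_eq_mul]
  have hSae : ∀ᵐ x ∂S, ‖x‖ = 1 := by
    rw [ae_iff]; convert hSs using 2; ext; simp
  have hμae : ∀ᵐ x ∂μ, ‖x‖ = 1 := by
    rw [ae_iff]; convert hμs using 2; ext; simp
  have key : ∀ ε > 0, |μ.real Set.univ * ∫ x, g x ∂S - S.real Set.univ * ∫ x, g x ∂μ|
      ≤ ε * (S.real Set.univ * μ.real Set.univ) := by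
    intro ε hε
    have huc : UniformContinuousOn g (Metric.sphere (0 : Rn N) 1) :=
      (isCompact_sphere _ _).uniformContinuousOn_of_continuous g.continuous.continuousOn
    rw [Metric.uniformContinuousOn_iff] at huc
    obtain ⟨r, hr, huc⟩ := huc ε hε
    set a := μ.real (Metric.ball x₀ r) with ha
    set s := S.real (Metric.ball x₀ r) with hs
    have ha0 : 0 < a := ENNReal.toReal_pos (ball_pos_of_invariant hμs hμ0 hμ hx₀' hr)
      (measure_ne_top _ _)
    have hax : ∀ x : Rn N, ‖x‖ = 1 → μ.real (Metric.ball x r) = a := fun x hx => by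
      simp only [ha, Measure.real]; rw [measure_ball_eq hμ (hx.trans hx₀'.symm)]
    have hsx : ∀ x : Rn N, ‖x‖ = 1 → S.real (Metric.ball x r) = s := fun x hx => by
      simp only [hs, Measure.real]; rw [measure_ball_eq hS (hx.trans hx₀'.symm)]
    let D : Set (Rn N × Rn N) := {p | dist p.1 p.2 < r}
    have hD : MeasurableSet D := (isOpen_lt (by fun_prop) (by fun_prop)).measurableSet
    have hi1 : Integrable (D.indicator fun p => g p.1) (S.prod μ) := by
      refine Integrable.indicator ?_ hD
      exact (BoundedContinuousFunction.integrable (S.prod μ)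
        (g.compContinuous ⟨Prod.fst, continuous_fst⟩))
    have hi2 : Integrable (D.indicator fun p => g p.2) (S.prod μ) := by
      refine Integrable.indicator ?_ hD
      exact (BoundedContinuousFunction.integrable (S.prod μ)
        (g.compContinuous ⟨Prod.snd, continuous_snd⟩))
    have hi3 : Integrable (D.indicator fun _ => (1:ℝ)) (S.prod μ) :=
      (integrable_const _).indicator hD
    have e1 : ∫ p, D.indicator (fun p => g p.1) p ∂(S.prod μ) = a * ∫ x, g x ∂S := by
      rw [integral_prod _ hi1, ← integral_const_mul]
      refine integral_congr_ae ?_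
      filter_upwards [hSae] with x hx
      have : (fun y => D.indicator (fun p => g p.1) (x, y))
          = (Metric.ball x r).indicator (fun _ => g x) := by
        ext y; simp only [Set.indicator, D, Set.mem_ofPred_eq, Metric.mem_ball, dist_comm y x]
      rw [this, integral_indicator_const _ Metric.isOpen_ball.measurableSet, hax x hx, smul_eq_mul]
    have e2 : ∫ p, D.indicator (fun p => g p.2) p ∂(S.prod μ) = s * ∫ x, g x ∂μ := by
      rw [integral_prod_symm _ hi2, ← integral_const_mul]
      refine integral_congr_ae ?_
      filter_upwards [hμae] with y hy
      have : (fun x => D.indicator (fun p => g p.2) (x, y))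
          = (Metric.ball y r).indicator (fun _ => g y) := by
        ext x; simp only [Set.indicator, D, Set.mem_ofPred_eq, Metric.mem_ball]
      rw [this, integral_indicator_const _ Metric.isOpen_ball.measurableSet, hsx y hy, smul_eq_mul]
    have e3 : ∫ p, D.indicator (fun _ => (1:ℝ)) p ∂(S.prod μ) = a * S.real Set.univ := by
      rw [integral_prod _ hi3]
      have : ∀ᵐ x ∂S, ∫ y, D.indicator (fun _ => (1:ℝ)) (x, y) ∂μ = a := by
        filter_upwards [hSae] with x hx
        have : (fun y => D.indicator (fun _ => (1:ℝ)) (x, y))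
            = (Metric.ball x r).indicator (fun _ => 1) := by
          ext y; simp only [Set.indicator, D, Set.mem_ofPred_eq, Metric.mem_ball, dist_comm y x]
        rw [this, integral_indicator_const _ Metric.isOpen_ball.measurableSet, hax x hx]; simp
      rw [integral_congr_ae this]; simp [mul_comm]
    have e4 : ∫ p, D.indicator (fun _ => (1:ℝ)) p ∂(S.prod μ) = s * μ.real Set.univ := by
      rw [integral_prod_symm _ hi3]
      have : ∀ᵐ y ∂μ, ∫ x, D.indicator (fun _ => (1:ℝ)) (x, y) ∂S = s := by
        filter_upwards [hμae] with y hy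
        have : (fun x => D.indicator (fun _ => (1:ℝ)) (x, y))
            = (Metric.ball y r).indicator (fun _ => 1) := by
          ext x; simp only [Set.indicator, D, Set.mem_ofPred_eq, Metric.mem_ball]
        rw [this, integral_indicator_const _ Metric.isOpen_ball.measurableSet, hsx y hy]; simp
      rw [integral_congr_ae this]; simp [mul_comm]
    have hb : |a * ∫ x, g x ∂S - s * ∫ x, g x ∂μ| ≤ ε * (a * S.real Set.univ) := by
      rw [← e1, ← e2, ← integral_sub hi1 hi2, ← e3, ← integral_const_mul, ← Real.norm_eq_abs]
      refine norm_integral_le_of_norm_le (hi3.const_mul ε) ?_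
      have h1 : ∀ᵐ p ∂(S.prod μ), ‖p.1‖ = 1 := Measure.quasiMeasurePreserving_fst.ae hSae
      have h2 : ∀ᵐ p ∂(S.prod μ), ‖p.2‖ = 1 := Measure.quasiMeasurePreserving_snd.ae hμae
      filter_upwards [h1, h2] with p hp1 hp2
      by_cases hp : p ∈ D
      · simp only [Set.indicator_of_mem hp]
        have := huc p.1 (by simpa using hp1) p.2 (by simpa using hp2) hp
        rw [Real.dist_eq] at this
        rw [Real.norm_eq_abs, mul_one]; exact this.le
      · simp [Set.indicator_of_notMem hp]
    have h34 := e3.symm.trans e4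
    have : a * |μ.real Set.univ * ∫ x, g x ∂S - S.real Set.univ * ∫ x, g x ∂μ|
        ≤ a * (ε * (S.real Set.univ * μ.real Set.univ)) := by
      rw [← abs_of_pos ha0, ← abs_mul, abs_of_pos ha0]
      have e : a * (μ.real Set.univ * ∫ x, g x ∂S - S.real Set.univ * ∫ x, g x ∂μ)
          = μ.real Set.univ * (a * ∫ x, g x ∂S - s * ∫ x, g x ∂μ) := by
        linear_combination (-∫ x, g x ∂μ) * h34
      rw [e, abs_mul, abs_of_pos hμu]
      nlinarith
    exact le_of_mul_le_mul_left this ha0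
  have hC : 0 ≤ S.real Set.univ * μ.real Set.univ := by positivity
  rw [← sub_eq_zero, ← abs_eq_zero]
  refine le_antisymm (le_of_forall_pos_le_add fun ε hε => ?_) (abs_nonneg _)
  refine (key (ε / (S.real Set.univ * μ.real Set.univ + 1)) (by positivity)).trans ?_
  rw [zero_add, div_mul_eq_mul_div, div_le_iff₀ (by positivity)]
  nlinarith

/-! ### Polar coordinates -/

/-- The surface measure obtained from Lebesgue measure by polar decomposition (`Measure.toSphere`),
pushed forward to the ambient space. -/
def sphLeb (N : ℕ) : Measure (Rn N) :=
  (Measure.toSphere (volume : Measure (Rn N))).map Subtype.val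

instance (N : ℕ) : IsFiniteMeasure (sphLeb N) := by
  unfold sphLeb; infer_instance

lemma sphLeb_compl (N : ℕ) : sphLeb N (Metric.sphere 0 1)ᶜ = 0 := by
  rw [sphLeb, Measure.map_apply measurable_subtype_coe Metric.isClosed_sphere.measurableSet.compl]
  convert measure_empty (μ := Measure.toSphere (volume : Measure (Rn N)))
  ext x; simp

lemma sphLeb_ne_zero {N : ℕ} (hN : 2 ≤ N) : sphLeb N ≠ 0 := by
  have : Nonempty (Fin N) := ⟨⟨0, by omega⟩⟩
  have : Nontrivial (Rn N) := inferInstance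
  intro h
  have h2 : sphLeb N Set.univ = 0 := by rw [h]; simp
  rw [sphLeb, Measure.map_apply measurable_subtype_coe MeasurableSet.univ, Set.preimage_univ,
    Measure.measure_univ_eq_zero] at h2
  exact Measure.toSphere_ne_zero (volume : Measure (Rn N)) h2

lemma sphLeb_map {N : ℕ} (L : Rn N ≃ₗᵢ[ℝ] Rn N) : (sphLeb N).map L = sphLeb N := by
  ext A hA
  have key : ∀ B : Set (Rn N), MeasurableSet B → sphLeb N B = (Module.finrank ℝ (Rn N)) *
      volume (Set.Ioo (0:ℝ) 1 • (B ∩ Metric.sphere 0 1)) := by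
    intro B hB
    rw [sphLeb, Measure.map_apply measurable_subtype_coe hB,
      Measure.toSphere_apply' _ (measurable_subtype_coe hB)]
    congr 3
    rw [Subtype.image_preimage_coe, Set.inter_comm]
  rw [Measure.map_apply L.continuous.measurable hA, key _ hA,
    key _ (L.continuous.measurable hA)]
  congr 1
  conv_rhs => rw [← (L.measurePreserving).measure_preimage_equiv (f := L.toMeasurableEquiv)]
  congr 1
  ext x
  simp only [Set.mem_smul, Set.mem_preimage, Set.mem_inter_iff]
  constructor
  · rintro ⟨r, hr, y, ⟨hy1, hy2⟩, rfl⟩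
    exact ⟨r, hr, L y, ⟨hy1, by simpa using hy2⟩, by simp⟩
  · rintro ⟨r, hr, y, ⟨hy1, hy2⟩, h⟩
    refine ⟨r, hr, L.symm y, ⟨by simpa using hy1, by simpa using hy2⟩, ?_⟩
    apply L.injective
    simpa using h

/-- Integration in polar coordinates. -/
lemma lintegral_polar {N : ℕ} {G : Rn N → ℝ≥0∞} (hG : Measurable G) (hN : 2 ≤ N) :
    ∫⁻ z, G z = ∫⁻ r : Set.Ioi (0:ℝ), ∫⁻ ω, G (r.1 • ω) ∂(sphLeb N)
      ∂(Measure.volumeIoiPow (Module.finrank ℝ (Rn N) - 1)) := by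
  have : Nonempty (Fin N) := ⟨⟨0, by omega⟩⟩
  have : Nontrivial (Rn N) := inferInstance
  have h1 : ∫⁻ z, G z = ∫⁻ z in ({0}ᶜ : Set (Rn N)), G z := by
    rw [restrict_compl_singleton]
  have hmp := Measure.measurePreserving_homeomorphUnitSphereProd (volume : Measure (Rn N))
  rw [h1, ← lintegral_subtype_comap (measurableSet_singleton _).compl]
  have h2 : ∀ z : ({0}ᶜ : Set (Rn N)), G z =
      (fun p : Metric.sphere (0 : Rn N) 1 × Set.Ioi (0:ℝ) => G (p.2.1 • p.1.1))
        (homeomorphUnitSphereProd (Rn N) z) := by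
    intro z
    have hz : ‖(z : Rn N)‖ ≠ 0 := norm_ne_zero_iff.2 z.2
    simp [smul_smul, hz]
  simp_rw [h2]
  have hm : Measurable (fun p : Metric.sphere (0 : Rn N) 1 × Set.Ioi (0:ℝ) => G (p.2.1 • p.1.1)) :=
    hG.comp (by fun_prop)
  rw [hmp.lintegral_comp hm, lintegral_prod_symm' _ hm]
  refine lintegral_congr fun r => ?_
  have hm2 : Measurable fun ω : Rn N => G (r.1 • ω) := hG.comp (by fun_prop)
  rw [sphLeb, lintegral_map hm2 measurable_subtype_coe]

lemma polar_swap_aux {N : ℕ} (hN : 2 ≤ N) {F : Rn N → Rn N → ℝ≥0∞}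
    (hF : Measurable (Function.uncurry F)) :
    ∫⁻ z, ∫⁻ σ, F z σ ∂(sphLeb N) = ∫⁻ z, ∫⁻ σ, F (‖z‖ • σ) (‖z‖⁻¹ • z) ∂(sphLeb N) := by
  have m1 : Measurable (fun z => ∫⁻ σ, F z σ ∂(sphLeb N)) := hF.lintegral_prod_right'
  have m0 : Measurable (fun p : Rn N × Rn N => F (‖p.1‖ • p.2) (‖p.1‖⁻¹ • p.1)) :=
    hF.comp (Measurable.prodMk (by fun_prop)
      ((measurable_fst.norm.inv).smul measurable_fst))
  have m2 : Measurable (fun z => ∫⁻ σ, F (‖z‖ • σ) (‖z‖⁻¹ • z) ∂(sphLeb N)) :=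
    m0.lintegral_prod_right'
  rw [lintegral_polar m1 hN, lintegral_polar m2 hN]
  refine lintegral_congr fun r => ?_
  have hr : (0:ℝ) < r := r.2
  have hae : ∀ᵐ x ∂(sphLeb N), ‖x‖ = 1 := by
    rw [ae_iff]; convert sphLeb_compl N using 2; ext; simp
  rw [lintegral_lintegral_swap (by
    exact (hF.comp (by fun_prop : Measurable fun p : Rn N × Rn N => (r.1 • p.1, p.2))).aemeasurable)]
  refine lintegral_congr_ae ?_
  filter_upwards [hae] with x hx
  refine lintegral_congr fun σ => ?_
  rw [norm_smul, hx, Real.norm_of_nonneg hr.le, mul_one, smul_smul, inv_mul_cancel₀ hr.ne', one_smul]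

lemma sphMeas_compl (N : ℕ) : sphMeas N (Metric.sphere 0 1)ᶜ = 0 := by
  rw [sphMeas, Measure.restrict_apply Metric.isClosed_sphere.measurableSet.compl]; simp

lemma sphMeas_ae (N : ℕ) : ∀ᵐ x ∂(sphMeas N), ‖x‖ = 1 := by
  rw [ae_iff]; convert sphMeas_compl N using 2; ext; simp

/-- The map `(z, σ) ↦ (|z| σ, z/|z|)` preserves `dz dσ`. This is clear in polar coordinates when
`dσ` is `sphLeb`, and carries over to `sphMeas` because the two are proportional. -/
lemma polar_swap {N : ℕ} (hN : 2 ≤ N) [IsFiniteMeasure (sphMeas N)] {F : Rn N → Rn N → ℝ≥0∞}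
    (hF : Measurable (Function.uncurry F)) :
    ∫⁻ z, ∫⁻ σ, F z σ ∂(sphMeas N) = ∫⁻ z, ∫⁻ σ, F (‖z‖ • σ) (‖z‖⁻¹ • z) ∂(sphMeas N) := by
  have hu := invariant_unique (sphMeas N) (sphLeb N) (sphMeas_compl N) (sphLeb_compl N)
    sph_map_isometry sphLeb_map (sphLeb_ne_zero hN)
  have h0 : sphLeb N Set.univ ≠ 0 := by simpa using sphLeb_ne_zero hN
  have ht : sphLeb N Set.univ ≠ ⊤ := measure_ne_top _ _
  have key : ∀ G : Rn N → Rn N → ℝ≥0∞, sphLeb N Set.univ * ∫⁻ z, ∫⁻ σ, G z σ ∂(sphMeas N)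
      = sphMeas N Set.univ * ∫⁻ z, ∫⁻ σ, G z σ ∂(sphLeb N) := by
    intro G
    rw [← lintegral_const_mul' _ _ ht, ← lintegral_const_mul' _ _ (measure_ne_top _ _)]
    refine lintegral_congr fun z => ?_
    rw [← smul_eq_mul, ← lintegral_smul_measure, hu, lintegral_smul_measure, smul_eq_mul]
  have := key F
  rw [polar_swap_aux hN hF, ← key (fun z σ => F (‖z‖ • σ) (‖z‖⁻¹ • z))] at this
  exact (ENNReal.mul_right_inj h0 ht).1 this

/-! ### Collisional changes of variables and a Borel angular kernel -/

/-- The unimodular change of variables `c = (v + w)/2`, `z = v - w`. -/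
lemma center_coords {N : ℕ} {K : Rn N → Rn N → ℝ≥0∞} (hK : Measurable (Function.uncurry K)) :
    ∫⁻ v, ∫⁻ w, K v w = ∫⁻ c, ∫⁻ z, K (c + (2:ℝ)⁻¹ • z) (c - (2:ℝ)⁻¹ • z) := by
  rw [lintegral_lintegral_swap hK.aemeasurable]
  have h1 : ∀ w, ∫⁻ v, K v w = ∫⁻ z, K (z + w) w := fun w =>
    (lintegral_add_right_eq_self (fun v => K v w) w).symm
  simp_rw [h1]
  have m1 : Measurable (Function.uncurry fun w z : Rn N => K (z + w) w) :=
    hK.comp (by fun_prop : Measurable fun p : Rn N × Rn N => (p.2 + p.1, p.1))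
  rw [lintegral_lintegral_swap m1.aemeasurable]
  have h2 : ∀ z : Rn N, ∫⁻ w, K (z + w) w
      = ∫⁻ c, K (c + (2:ℝ)⁻¹ • z) (c - (2:ℝ)⁻¹ • z) := fun z => by
    rw [← lintegral_sub_right_eq_self (fun w => K (z + w) w) ((2:ℝ)⁻¹ • z)]
    refine lintegral_congr fun c => ?_
    congr 1
    module
  simp_rw [h2]
  have m2 : Measurable (Function.uncurry fun z c : Rn N =>
      K (c + (2:ℝ)⁻¹ • z) (c - (2:ℝ)⁻¹ • z)) :=
    hK.comp (by fun_prop : Measurable fun p : Rn N × Rn N =>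
      (p.2 + (2:ℝ)⁻¹ • p.1, p.2 - (2:ℝ)⁻¹ • p.1))
  rw [lintegral_lintegral_swap m2.aemeasurable]

/-- The pre-post collisional change of variables. -/
lemma collision_change {N : ℕ} (hN : 2 ≤ N) [IsFiniteMeasure (sphMeas N)]
    {H : Rn N → Rn N → Rn N → ℝ≥0∞}
    (hH : Measurable fun p : (Rn N × Rn N) × Rn N => H p.1.1 p.1.2 p.2) :
    ∫⁻ v, ∫⁻ w, ∫⁻ σ, H v w σ ∂(sphMeas N) =
      ∫⁻ v, ∫⁻ w, ∫⁻ σ, H (vP N v w σ) (vSP N v w σ) (‖v - w‖⁻¹ • (v - w)) ∂(sphMeas N) := by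
  have m1 : Measurable (Function.uncurry fun v w => ∫⁻ σ, H v w σ ∂(sphMeas N)) :=
    hH.lintegral_prod_right'
  have m2 : Measurable (Function.uncurry fun v w =>
      ∫⁻ σ, H (vP N v w σ) (vSP N v w σ) (‖v - w‖⁻¹ • (v - w)) ∂(sphMeas N)) := by
    have : Measurable fun p : (Rn N × Rn N) × Rn N =>
        H (vP N p.1.1 p.1.2 p.2) (vSP N p.1.1 p.1.2 p.2) (‖p.1.1 - p.1.2‖⁻¹ • (p.1.1 - p.1.2)) := by
      refine hH.comp (f := fun p : (Rn N × Rn N) × Rn N => ((vP N p.1.1 p.1.2 p.2,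
        vSP N p.1.1 p.1.2 p.2), ‖p.1.1 - p.1.2‖⁻¹ • (p.1.1 - p.1.2))) ?_
      unfold vP vSP
      fun_prop
    exact this.lintegral_prod_right'
  rw [center_coords m1, center_coords m2]
  refine lintegral_congr fun c => ?_
  have m3 : Measurable (Function.uncurry fun z σ =>
      H (c + (2:ℝ)⁻¹ • z) (c - (2:ℝ)⁻¹ • z) σ) :=
    hH.comp (by fun_prop : Measurable fun p : Rn N × Rn N =>
      ((c + (2:ℝ)⁻¹ • p.1, c - (2:ℝ)⁻¹ • p.1), p.2))
  rw [polar_swap hN m3]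
  refine lintegral_congr fun z => lintegral_congr fun σ => ?_
  have e0 : (c + (2:ℝ)⁻¹ • z) - (c - (2:ℝ)⁻¹ • z) = z := by module
  have e1 : vP N (c + (2:ℝ)⁻¹ • z) (c - (2:ℝ)⁻¹ • z) σ = c + (2:ℝ)⁻¹ • ‖z‖ • σ := by
    rw [vP, e0]; module
  have e2 : vSP N (c + (2:ℝ)⁻¹ • z) (c - (2:ℝ)⁻¹ • z) σ = c - (2:ℝ)⁻¹ • ‖z‖ • σ := by
    rw [vSP, e0]; module
  rw [e0, e1, e2]

/-- Exchange of the two colliding particles. -/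
lemma collision_symm {N : ℕ} [IsFiniteMeasure (sphMeas N)]
    {H : Rn N → Rn N → Rn N → ℝ≥0∞}
    (hH : Measurable fun p : (Rn N × Rn N) × Rn N => H p.1.1 p.1.2 p.2) :
    ∫⁻ v, ∫⁻ w, ∫⁻ σ, H v w σ ∂(sphMeas N) =
      ∫⁻ v, ∫⁻ w, ∫⁻ σ, H w v (-σ) ∂(sphMeas N) := by
  have m1 : Measurable (Function.uncurry fun v w => ∫⁻ σ, H v w σ ∂(sphMeas N)) :=
    hH.lintegral_prod_right'
  rw [lintegral_lintegral_swap m1.aemeasurable]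
  refine lintegral_congr fun v => lintegral_congr fun w => ?_
  have m3 : Measurable fun σ => H w v σ :=
    hH.comp (by fun_prop : Measurable fun p : Rn N => ((w, v), p))
  conv_lhs => rw [← sph_map_isometry (LinearIsometryEquiv.neg ℝ (E := Rn N)),
    lintegral_map m3 (LinearIsometryEquiv.continuous _).measurable]
  rfl

/-- If `p⁻¹ A` is null measurable, then `A` contains a Borel set with almost the same preimage: exhaust
`p⁻¹ A` by compact sets and take the union of their images. -/
lemma exists_measurable_inner {X : Type*} [TopologicalSpace X] [PolishSpace X] [MeasurableSpace X]
    [BorelSpace X] {S : Measure X} [IsFiniteMeasure S] {p : X → ℝ} (hp : Continuous p) {A : Set ℝ}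
    (hA : NullMeasurableSet (p ⁻¹' A) S) :
    ∃ B ⊆ A, MeasurableSet B ∧ S (p ⁻¹' A \ p ⁻¹' B) = 0 := by
  obtain ⟨t, htA, htm, hte⟩ := hA.exists_measurable_subset_ae_eq
  have h : ∀ n : ℕ, ∃ K ⊆ t, IsCompact K ∧ S (t \ K) < ((n : ℝ≥0∞) + 1)⁻¹ := fun n =>
    htm.exists_isCompact_sdiff_lt (measure_ne_top _ _) (by simp)
  choose K hKt hKc hK using h
  refine ⟨⋃ n, p '' K n, ?_, ?_, ?_⟩
  · refine Set.iUnion_subset fun n => ?_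
    rintro _ ⟨x, hx, rfl⟩
    exact htA (hKt n hx)
  · exact MeasurableSet.iUnion fun n => ((hKc n).image hp).isClosed.measurableSet
  · have h1 : S (t \ p ⁻¹' (⋃ n, p '' K n)) = 0 := by
      refine le_antisymm (le_of_forall_gt fun ε hε => ?_) bot_le
      obtain ⟨n, hn⟩ := ENNReal.exists_inv_nat_lt hε.ne'
      refine lt_of_le_of_lt (measure_mono ?_) ((hK n).trans_le (le_trans ?_ hn.le))
      · refine Set.sdiff_subset_sdiff_right ?_
        intro x hx
        exact Set.mem_iUnion.2 ⟨n, x, hx, rfl⟩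
      · exact ENNReal.inv_le_inv.2 le_self_add
    have h2 : S (p ⁻¹' A \ t) = 0 := by
      rw [ae_eq_set] at hte; exact hte.2
    refine measure_mono_null ?_ (measure_union_null h1 h2)
    rintro x ⟨hx1, hx2⟩
    by_cases hxt : x ∈ t
    · exact Or.inl ⟨hxt, hx2⟩
    · exact Or.inr ⟨hx1, hxt⟩

/-- A set whose preimage under a continuous map is null measurable is itself null measurable for the
image measure. -/
lemma nullMeasurable_of_preimage {X : Type*} [TopologicalSpace X] [PolishSpace X]
    [MeasurableSpace X]
    [BorelSpace X] {S : Measure X} [IsFiniteMeasure S] {p : X → ℝ} (hp : Continuous p) {A : Set ℝ}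
    (hA : NullMeasurableSet (p ⁻¹' A) S) : NullMeasurableSet A (S.map p) := by
  obtain ⟨B, hBA, hB, hB0⟩ := exists_measurable_inner hp hA
  obtain ⟨B', hBA', hB', hB0'⟩ := exists_measurable_inner hp (A := Aᶜ) hA.compl
  refine ⟨B, hB, ?_⟩
  rw [ae_eq_set, Set.sdiff_eq_empty.2 hBA]
  refine ⟨?_, measure_empty⟩
  refine measure_mono_null (t := B'ᶜ \ B) ?_ ?_
  · exact Set.sdiff_subset_sdiff_left (fun x hx hx' => hBA' hx' hx)
  · rw [Measure.map_apply hp.measurable (hB'.compl.diff hB)]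
    refine measure_mono_null ?_ (measure_union_null hB0 hB0')
    rintro x ⟨hx1, hx2⟩
    by_cases hxA : p x ∈ A
    · exact Or.inl ⟨hxA, hx2⟩
    · exact Or.inr ⟨hxA, hx1⟩

/-- Integrability of `σ ↦ b⟪u, σ⟫` forces `b` to be null measurable for the law of `⟪u, σ⟫`, which does
not depend on the unit vector `u`; hence a single Borel function agrees with `b` in all directions. -/
lemma exists_measurable_b {N : ℕ} [IsFiniteMeasure (sphMeas N)] {b : ℝ → ℝ} {b₀ : ℝ}
    (hb0 : ∀ x, b₀ ≤ b x)
    (hb : ∀ u : Rn N, ‖u‖ = 1 → Integrable (fun σ : Rn N => b ⟪u, σ⟫) (sphMeas N)) :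
    ∃ b' : ℝ → ℝ, Measurable b' ∧ (∀ x, b₀ ≤ b' x) ∧
      ∀ u : Rn N, ‖u‖ = 1 → ∀ᵐ σ ∂(sphMeas N), b ⟪u, σ⟫ = b' ⟪u, σ⟫ := by
  by_cases hne : ∃ u₀ : Rn N, ‖u₀‖ = 1
  · obtain ⟨u₀, hu₀⟩ := hne
    have hp : Continuous fun σ : Rn N => ⟪u₀, σ⟫ := by fun_prop
    have hnm : NullMeasurable b ((sphMeas N).map fun σ => ⟪u₀, σ⟫) := by
      intro A hA
      refine nullMeasurable_of_preimage hp ?_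
      exact (hb u₀ hu₀).aestronglyMeasurable.aemeasurable.nullMeasurable hA
    have hae := hnm.aemeasurable
    refine ⟨fun x => max b₀ (hae.mk b x), measurable_const.max hae.measurable_mk,
      fun x => le_max_left _ _, fun u hu => ?_⟩
    have h1 := ae_of_ae_map hp.measurable.aemeasurable hae.ae_eq_mk
    obtain ⟨L, hL⟩ := exists_isometry (hu.trans hu₀.symm)
    have h2 : ∀ᵐ σ ∂(sphMeas N).map L, b ⟪u₀, σ⟫ = hae.mk b ⟪u₀, σ⟫ := by
      rw [sph_map_isometry]; exact h1
    filter_upwards [ae_of_ae_map L.continuous.measurable.aemeasurable h2] with σ hσ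
    have hi : ⟪u₀, L σ⟫ = ⟪u, σ⟫ := by rw [← hL, LinearIsometryEquiv.inner_map_map]
    rw [hi] at hσ
    rw [← hσ, max_eq_right (hb0 _)]
  · push Not at hne
    exact ⟨fun _ => b₀, measurable_const, fun _ => le_rfl, fun u hu => absurd hu (hne u)⟩

/-! ### The pointwise Povzner inequality -/

/-- A moment weight, as a function of `x = 1 + |v|²`: it grows at least like `x ^ a`, and under
dilation by a factor in `[1, 2]` at most like `x ^ A`. -/
structure IsWeight (a A : ℝ) (ψ : ℝ → ℝ) : Prop where
  nonneg : ∀ x, 0 ≤ x → 0 ≤ ψ x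
  shrink : ∀ l x, 0 ≤ l → l ≤ 1 → 0 ≤ x → ψ (l * x) ≤ l ^ a * ψ x
  stretch : ∀ l x, 1 ≤ l → l ≤ 2 → 0 ≤ x → ψ (l * x) ≤ l ^ A * ψ x

/-- The constant in `m ^ a + (1 - m) ^ a ≤ 1 - splitConst a * (m * (1 - m))` for `0 ≤ m ≤ 1`. -/
def splitConst (a : ℝ) : ℝ := 2 * min (a - 1) 1

lemma splitConst_nonneg {a : ℝ} (ha : 1 ≤ a) : 0 ≤ splitConst a := by
  unfold splitConst
  have : 0 ≤ min (a - 1) 1 := le_min (by linarith) zero_le_one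
  linarith

lemma splitConst_pos {a : ℝ} (ha : 1 < a) : 0 < splitConst a := by
  unfold splitConst
  have : 0 < min (a - 1) 1 := lt_min (by linarith) zero_lt_one
  linarith

lemma rpow_split_aux {a m : ℝ} (ha : 1 ≤ a) (h0 : 0 ≤ m) (h1 : m ≤ 1) :
    m ^ a ≤ m * (1 + min (a - 1) 1 * (m - 1)) := by
  rcases h0.eq_or_lt with rfl | hm
  · rw [zero_rpow (by linarith)]; simp
  · set p := min (a - 1) 1 with hp
    have hp0 : 0 ≤ p := le_min (by linarith) zero_le_one
    have hp1 : p ≤ 1 := min_le_right _ _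
    have hpa : 1 + p ≤ a := by linarith [min_le_left (a - 1) (1:ℝ)]
    calc m ^ a ≤ m ^ (1 + p) := rpow_le_rpow_of_exponent_ge hm h1 hpa
      _ = m * m ^ p := by rw [Real.rpow_add hm, Real.rpow_one]
      _ ≤ m * (1 + p * (m - 1)) := by
        have := rpow_one_add_le_one_add_mul_self (s := m - 1) (by linarith) hp0 hp1
        rw [add_sub_cancel] at this
        gcongr

lemma rpow_split {a m : ℝ} (ha : 1 ≤ a) (h0 : 0 ≤ m) (h1 : m ≤ 1) :
    m ^ a + (1 - m) ^ a ≤ 1 - splitConst a * (m * (1 - m)) := by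
  have e1 := rpow_split_aux ha h0 h1
  have e2 := rpow_split_aux ha (m := 1 - m) (by linarith) (by linarith)
  unfold splitConst
  nlinarith

lemma rpow_one_add_le {A r : ℝ} (hA : 1 ≤ A) (h0 : 0 ≤ r) (h1 : r ≤ 1) :
    (1 + r) ^ A ≤ 1 + 2 ^ A * r := by
  have := (convexOn_rpow hA).2 (show (1:ℝ) ∈ Set.Ici 0 by simp) (show (2:ℝ) ∈ Set.Ici 0 by simp)
    (show 0 ≤ 1 - r by linarith) h0 (by ring)
  simp only [smul_eq_mul, Real.one_rpow, mul_one] at this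
  have e : 1 - r + r * 2 = 1 + r := by ring
  rw [e] at this
  nlinarith

lemma povzner_aux {a A : ℝ} {ψ : ℝ → ℝ} (ha : 1 ≤ a) (hA : 1 ≤ A) (hψ : IsWeight a A ψ)
    {x y x' y' : ℝ} (hy : 0 < y) (hyx : y ≤ x) (hx' : 0 ≤ x') (hy' : 0 ≤ y')
    (hE : x' + y' = x + y) :
    ψ x' + ψ y' + splitConst a * (x' * y' / (x + y) ^ 2) * ((ψ x + ψ y) / 2) ≤
      ψ x + ψ y + 2 ^ A * (y * (ψ x / x) + x * (ψ y / y)) := by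
  have hx : 0 < x := hy.trans_le hyx
  set E := x + y with hEdef
  have hEpos : 0 < E := by positivity
  set m := x' / E with hm
  have hm0 : 0 ≤ m := by positivity
  have hm1 : m ≤ 1 := by rw [hm, div_le_one hEpos]; linarith
  have e1 : ψ x' ≤ m ^ a * ψ E := by
    have := hψ.shrink m E hm0 hm1 hEpos.le
    rwa [hm, div_mul_cancel₀ _ hEpos.ne'] at this
  have hm' : 1 - m = y' / E := by rw [hm]; field_simp; linarith
  have e2 : ψ y' ≤ (1 - m) ^ a * ψ E := by
    have := hψ.shrink (1 - m) E (by linarith) (by linarith) hEpos.le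
    rwa [hm', div_mul_cancel₀ _ hEpos.ne', ← hm'] at this
  have hq : x' * y' / E ^ 2 = m * (1 - m) := by rw [hm', hm]; field_simp
  rw [hq]
  set q := splitConst a * (m * (1 - m)) with hqdef
  have hq0 : 0 ≤ q := mul_nonneg (splitConst_nonneg ha) (mul_nonneg hm0 (by linarith))
  have e3 := rpow_split ha hm0 hm1
  have hq1 : 0 ≤ 1 - q := by
    refine le_trans ?_ e3
    have := rpow_nonneg hm0 a
    have := rpow_nonneg (show 0 ≤ 1 - m by linarith) a
    linarith
  have hr1 : y / x ≤ 1 := (div_le_one hx).2 hyx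
  have hr0 : 0 ≤ y / x := by positivity
  have e4 : ψ E ≤ (1 + 2 ^ A * (y / x)) * ψ x := by
    have := hψ.stretch (1 + y / x) x (by linarith) (by linarith) hx.le
    have e : (1 + y / x) * x = E := by rw [hEdef]; field_simp
    rw [e] at this
    exact this.trans (mul_le_mul_of_nonneg_right (rpow_one_add_le hA hr0 hr1) (hψ.nonneg x hx.le))
  have e5 : ψ y ≤ ψ x := by
    have := hψ.shrink (y / x) x hr0 hr1 hx.le
    rw [div_mul_cancel₀ _ hx.ne'] at this
    refine this.trans ?_
    have h1 := rpow_le_one hr0 hr1 (show 0 ≤ a by linarith)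
    nlinarith [hψ.nonneg x hx.le]
  have hψx := hψ.nonneg x hx.le
  have hψy := hψ.nonneg y hy.le
  have hψE := hψ.nonneg E hEpos.le
  have hA0 : (0:ℝ) < 2 ^ A := by positivity
  have e6 : ψ x' + ψ y' ≤ (1 - q) * ((1 + 2 ^ A * (y / x)) * ψ x) := by
    calc ψ x' + ψ y' ≤ (m ^ a + (1 - m) ^ a) * ψ E := by linarith
      _ ≤ (1 - q) * ψ E := by gcongr
      _ ≤ _ := by gcongr
  have e7 : y * (ψ x / x) = y / x * ψ x := by ring
  have e8 : 0 ≤ x * (ψ y / y) := by positivity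
  have e9 : 0 ≤ q * (2 ^ A * (y / x) * ψ x) := by positivity
  have e10 : q * ((ψ x + ψ y) / 2) ≤ q * ψ x := by gcongr; linarith
  have e11 : 0 ≤ 2 ^ A * (x * (ψ y / y)) := by positivity
  rw [e7]
  nlinarith

/-- Povzner inequality for a redistribution `x + y = x' + y'` of the energy: the sum of the weights
decreases by an amount proportional to the mixing `x' y' / (x + y)²`, up to an error of lower order,
each term of which carries `ψ(z)/z` at one particle and the energy of the other. -/
lemma povzner {a A : ℝ} {ψ : ℝ → ℝ} (ha : 1 ≤ a) (hA : 1 ≤ A) (hψ : IsWeight a A ψ)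
    {x y x' y' : ℝ} (hx : 0 < x) (hy : 0 < y) (hx' : 0 ≤ x') (hy' : 0 ≤ y')
    (hE : x' + y' = x + y) :
    ψ x' + ψ y' + splitConst a * (x' * y' / (x + y) ^ 2) * ((ψ x + ψ y) / 2) ≤
      ψ x + ψ y + 2 ^ A * (y * (ψ x / x) + x * (ψ y / y)) := by
  rcases le_total y x with h | h
  · exact povzner_aux ha hA hψ hy h hx' hy' hE
  · have := povzner_aux ha hA hψ hx h hy' hx' (by linarith)
    have e1 : y' * x' / (y + x) ^ 2 = x' * y' / (x + y) ^ 2 := by rw [mul_comm y', add_comm y]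
    rw [e1] at this
    linarith

/-- The squared bracket `⟨v⟩² = 1 + |v|²`. -/
def br {N : ℕ} (v : Rn N) : ℝ := 1 + ‖v‖ ^ 2

lemma one_le_br {N : ℕ} (v : Rn N) : 1 ≤ br v := by unfold br; nlinarith [sq_nonneg ‖v‖]
lemma br_pos {N : ℕ} (v : Rn N) : 0 < br v := lt_of_lt_of_le one_pos (one_le_br v)

lemma continuous_br {N : ℕ} : Continuous (br (N := N)) := by unfold br; fun_prop

lemma br_vP {N : ℕ} (v w σ : Rn N) (hσ : ‖σ‖ = 1) :
    br (vP N v w σ) = (br v + br w) / 2 + ‖v - w‖ * ⟪v + w, σ⟫ / 2 := by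
  have h1 := norm_add_sq_real ((2:ℝ)⁻¹ • (v + w)) ((‖v - w‖ / 2) • σ)
  have h2 := norm_add_sq_real v w
  have h3 := norm_sub_sq_real v w
  simp only [norm_smul, inner_smul_left, inner_smul_right, hσ, norm_div, norm_inv, norm_norm] at h1
  simp only [br, vP]
  rw [h1]
  simp at *
  nlinarith

lemma br_vSP {N : ℕ} (v w σ : Rn N) (hσ : ‖σ‖ = 1) :
    br (vSP N v w σ) = (br v + br w) / 2 - ‖v - w‖ * ⟪v + w, σ⟫ / 2 := by
  have := br_vP v w (-σ) (by simpa using hσ)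
  have e : vP N v w (-σ) = vSP N v w σ := by simp only [vP, vSP]; module
  rw [e, inner_neg_right] at this
  rw [this]; ring

/-- The post-collisional energies are comparable unless `σ` is nearly parallel to `v + w`. -/
lemma br_prod_lower {N : ℕ} (v w σ e : Rn N) (hσ : ‖σ‖ = 1) (hve : v + w = ‖v + w‖ • e) :
    (1 - ⟪e, σ⟫ ^ 2) / 4 ≤ br (vP N v w σ) * br (vSP N v w σ) / (br v + br w) ^ 2 := by
  have hE : 0 < br v + br w := add_pos (br_pos v) (br_pos w)
  rw [br_vP v w σ hσ, br_vSP v w σ hσ, le_div_iff₀ (by positivity)]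
  have h1 : ⟪v + w, σ⟫ = ‖v + w‖ * ⟪e, σ⟫ := by
    conv_lhs => rw [hve]
    rw [real_inner_smul_left]
  rw [h1]
  have h2 := parallelogram_law_with_norm ℝ v w
  have h3 : ‖v - w‖ * ‖v + w‖ ≤ br v + br w := by
    unfold br
    nlinarith [sq_nonneg (‖v - w‖ - ‖v + w‖)]
  have h4 : (‖v - w‖ * ‖v + w‖) ^ 2 ≤ (br v + br w) ^ 2 := by
    gcongr
  nlinarith [mul_le_mul_of_nonneg_right h4 (sq_nonneg ⟪e, σ⟫)]

/-- The pointwise Povzner inequality. -/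
lemma povzner_collision {N : ℕ} {a A : ℝ} {ψ : ℝ → ℝ} (ha : 1 ≤ a) (hA : 1 ≤ A)
    (hψ : IsWeight a A ψ) (v w σ e : Rn N) (hσ : ‖σ‖ = 1) (hve : v + w = ‖v + w‖ • e) :
    ψ (br (vP N v w σ)) + ψ (br (vSP N v w σ))
      + splitConst a / 8 * (1 - ⟪e, σ⟫ ^ 2) * ψ (br v) ≤
    ψ (br v) + ψ (br w) + 2 ^ A * (br w * (ψ (br v) / br v) + br v * (ψ (br w) / br w)) := by
  have h := povzner ha hA hψ (br_pos v) (br_pos w) (br_pos (vP N v w σ)).le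
    (br_pos (vSP N v w σ)).le (by rw [br_vP v w σ hσ, br_vSP v w σ hσ]; ring)
  refine le_trans ?_ h
  have h1 := br_prod_lower v w σ e hσ hve
  have h2 := splitConst_nonneg ha
  have h3 := hψ.nonneg _ (br_pos v).le
  have h4 := hψ.nonneg _ (br_pos w).le
  set R := br (vP N v w σ) * br (vSP N v w σ) / (br v + br w) ^ 2 with hR
  have hR0 : 0 ≤ R := by
    have := br_pos (vP N v w σ); have := br_pos (vSP N v w σ); positivity
  have : splitConst a / 8 * (1 - ⟪e, σ⟫ ^ 2) * ψ (br v)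
      ≤ splitConst a * R * ((ψ (br v) + ψ (br w)) / 2) := by
    calc splitConst a / 8 * (1 - ⟪e, σ⟫ ^ 2) * ψ (br v)
        = splitConst a * ((1 - ⟪e, σ⟫ ^ 2) / 4) * (ψ (br v) / 2) := by ring
      _ ≤ splitConst a * R * (ψ (br v) / 2) := by gcongr
      _ ≤ _ := by gcongr; linarith
  linarith

/-! ### The integrated Povzner inequality -/

/-- An abstract collision kernel `k v w σ`: measurable, invariant under the collisional
involution and under exchange of the two particles, with angular integral at most `B`, and bounded
below by `cL ⟨v⟩^{-2δ} ⟨w⟩^{-2}`. -/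
structure CollKernel (N : ℕ) (k : Rn N → Rn N → Rn N → ℝ≥0∞) (δ cL : ℝ) (B : ℝ≥0∞) : Prop where
  meas : Measurable fun p : (Rn N × Rn N) × Rn N => k p.1.1 p.1.2 p.2
  flip : ∀ v w σ, ‖σ‖ = 1 → k (vP N v w σ) (vSP N v w σ) (‖v - w‖⁻¹ • (v - w)) = k v w σ
  symm : ∀ v w σ, k w v (-σ) = k v w σ
  upper : ∀ v w, ∫⁻ σ, k v w σ ∂(sphMeas N) ≤ B
  lower : ∀ v w σ, ENNReal.ofReal (cL * br v ^ (-δ) * (br w)⁻¹) ≤ k v w σ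

/-- The gain part of `Q(g,g)`, with values in `[0,∞]`. -/
def gainE {N : ℕ} (k : Rn N → Rn N → Rn N → ℝ≥0∞) (g : Rn N → ℝ≥0∞) (v : Rn N) : ℝ≥0∞ :=
  ∫⁻ w, ∫⁻ σ, k v w σ * (g (vSP N v w σ) * g (vP N v w σ)) ∂(sphMeas N)

/-- The loss part of `Q(g,g)`, with values in `[0,∞]`. -/
def lossE {N : ℕ} (k : Rn N → Rn N → Rn N → ℝ≥0∞) (g : Rn N → ℝ≥0∞) (v : Rn N) : ℝ≥0∞ :=
  ∫⁻ w, ∫⁻ σ, k v w σ * (g w * g v) ∂(sphMeas N)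

section
variable {N : ℕ} {k : Rn N → Rn N → Rn N → ℝ≥0∞} {δ cL : ℝ} {B : ℝ≥0∞}

lemma meas_mul {X : Type*} [MeasurableSpace X] {f g : X → ℝ≥0∞} (hf : Measurable f)
    (hg : Measurable g) : Measurable fun x => f x * g x := hf.mul hg

lemma measurable_vP3 : Measurable fun p : (Rn N × Rn N) × Rn N => vP N p.1.1 p.1.2 p.2 := by
  unfold vP; fun_prop

lemma measurable_vSP3 : Measurable fun p : (Rn N × Rn N) × Rn N => vSP N p.1.1 p.1.2 p.2 := by
  unfold vSP; fun_prop

/-- The collisional transformation, with `σ` replaced by `(v - w)/|v - w|`, is an involution. -/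
lemma vP_flip (v w σ : Rn N) (hσ : ‖σ‖ = 1) :
    vP N (vP N v w σ) (vSP N v w σ) (‖v - w‖⁻¹ • (v - w)) = v ∧
    vSP N (vP N v w σ) (vSP N v w σ) (‖v - w‖⁻¹ • (v - w)) = w := by
  have h1 : vP N v w σ - vSP N v w σ = ‖v - w‖ • σ := by simp only [vP, vSP]; module
  have h2 : ‖vP N v w σ - vSP N v w σ‖ = ‖v - w‖ := by rw [h1, norm_smul, hσ]; simp
  have h3 : vP N v w σ + vSP N v w σ = v + w := by simp only [vP, vSP]; module
  have h4 : (‖v - w‖ / 2) • (‖v - w‖⁻¹ • (v - w)) = (2:ℝ)⁻¹ • (v - w) := by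
    rcases eq_or_ne (v - w) 0 with h | h
    · rw [h]; simp
    · rw [smul_smul]; congr 1
      have := norm_ne_zero_iff.2 h
      field_simp
  constructor
  · rw [vP, h2, h3, h4]; module
  · rw [vSP, h2, h3, h4]; module

lemma vP_symm (v w σ : Rn N) : vP N w v (-σ) = vSP N v w σ := by
  simp only [vP, vSP, norm_sub_rev w v]; module

lemma CollKernel.meas_gain (hk : CollKernel N k δ cL B) {g φ : Rn N → ℝ≥0∞} (hg : Measurable g)
    (hφ : Measurable φ) : Measurable fun p : (Rn N × Rn N) × Rn N =>
      k p.1.1 p.1.2 p.2 * (g (vSP N p.1.1 p.1.2 p.2) * g (vP N p.1.1 p.1.2 p.2)) * φ p.1.1 := by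
  have h1 := hg.comp (measurable_vSP3 (N := N))
  have h2 := hg.comp (measurable_vP3 (N := N))
  have h3 : Measurable fun p : (Rn N × Rn N) × Rn N => φ p.1.1 := hφ.comp (by fun_prop)
  exact (hk.meas.mul (h1.mul h2)).mul h3

lemma CollKernel.meas_loss (hk : CollKernel N k δ cL B) {g : Rn N → ℝ≥0∞} (hg : Measurable g)
    {F : Rn N → Rn N → Rn N → ℝ≥0∞}
    (hF : Measurable fun p : (Rn N × Rn N) × Rn N => F p.1.1 p.1.2 p.2) :
    Measurable fun p : (Rn N × Rn N) × Rn N =>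
      k p.1.1 p.1.2 p.2 * (g p.1.2 * g p.1.1) * F p.1.1 p.1.2 p.2 := by
  have h1 : Measurable fun p : (Rn N × Rn N) × Rn N => g p.1.2 := hg.comp (by fun_prop)
  have h2 : Measurable fun p : (Rn N × Rn N) × Rn N => g p.1.1 := hg.comp (by fun_prop)
  exact (hk.meas.mul (h1.mul h2)).mul hF

/-- The weighted collision integral `∫∫∫ k g(w) g(v) F dσ dw dv`. -/
def collInt (k : Rn N → Rn N → Rn N → ℝ≥0∞) (g : Rn N → ℝ≥0∞)
    (F : Rn N → Rn N → Rn N → ℝ≥0∞) : ℝ≥0∞ :=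
  ∫⁻ v, ∫⁻ w, ∫⁻ σ, k v w σ * (g w * g v) * F v w σ ∂(sphMeas N)

variable [IsFiniteMeasure (sphMeas N)]

lemma collInt_symm (hk : CollKernel N k δ cL B) {g : Rn N → ℝ≥0∞} (hg : Measurable g)
    {F : Rn N → Rn N → Rn N → ℝ≥0∞}
    (hF : Measurable fun p : (Rn N × Rn N) × Rn N => F p.1.1 p.1.2 p.2) :
    collInt k g F = collInt k g fun v w σ => F w v (-σ) := by
  unfold collInt
  rw [collision_symm (hk.meas_loss hg hF)]
  simp only [hk.symm]
  simp only [mul_comm (g _) (g _)]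

lemma gain_moment (hN : 2 ≤ N) (hk : CollKernel N k δ cL B) {g φ : Rn N → ℝ≥0∞}
    (hg : Measurable g) (hφ : Measurable φ) :
    ∫⁻ v, gainE k g v * φ v = collInt k g fun v w σ => φ (vP N v w σ) := by
  have hm := hk.meas_gain hg hφ
  have hm0 := hk.meas_gain (φ := fun _ => 1) hg measurable_const
  simp only [mul_one] at hm0
  unfold gainE collInt
  have e1 : ∀ v, (∫⁻ w, ∫⁻ σ, k v w σ * (g (vSP N v w σ) * g (vP N v w σ)) ∂(sphMeas N)) * φ v
      = ∫⁻ w, ∫⁻ σ, k v w σ * (g (vSP N v w σ) * g (vP N v w σ)) * φ v ∂(sphMeas N) := fun v => by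
    rw [← lintegral_mul_const]
    · refine lintegral_congr fun w => ?_
      rw [← lintegral_mul_const]
      exact hm0.comp (measurable_prodMk_left (x := (v, w)))
    · exact hm0.lintegral_prod_right'.comp (measurable_prodMk_left (x := v))
  simp_rw [e1]
  rw [collision_change hN (H := fun v w σ =>
    k v w σ * (g (vSP N v w σ) * g (vP N v w σ)) * φ v) hm]
  refine lintegral_congr fun v => lintegral_congr fun w => lintegral_congr_ae ?_
  filter_upwards [sphMeas_ae N] with σ hσ
  obtain ⟨h1, h2⟩ := vP_flip v w σ hσ
  rw [hk.flip v w σ hσ, h1, h2]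

lemma loss_moment (hk : CollKernel N k δ cL B) {g φ : Rn N → ℝ≥0∞}
    (hg : Measurable g) :
    ∫⁻ v, lossE k g v * φ v = collInt k g fun v _ _ => φ v := by
  have hm0 := hk.meas_loss (F := fun _ _ _ => 1) hg measurable_const
  simp only [mul_one] at hm0
  unfold lossE collInt
  refine lintegral_congr fun v => ?_
  rw [← lintegral_mul_const]
  · refine lintegral_congr fun w => ?_
    rw [← lintegral_mul_const]
    exact hm0.comp (measurable_prodMk_left (x := (v, w)))
  · exact hm0.lintegral_prod_right'.comp (measurable_prodMk_left (x := v))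

lemma collInt_le (hk : CollKernel N k δ cL B) {g : Rn N → ℝ≥0∞} (hg : Measurable g)
    {F G : Rn N → ℝ≥0∞} (hF : Measurable F) (hG : Measurable G) :
    (collInt k g fun v w _ => F v * G w) ≤ B * (∫⁻ v, g v * F v) * (∫⁻ w, g w * G w) := by
  unfold collInt
  have e1 : ∀ v w, ∫⁻ σ, k v w σ * (g w * g v) * (F v * G w) ∂(sphMeas N)
      ≤ B * (g v * F v) * (g w * G w) := fun v w => by
    have hkm : Measurable fun σ => k v w σ := hk.meas.comp (measurable_prodMk_left (x := (v, w)))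
    simp_rw [mul_assoc]
    rw [lintegral_mul_const _ hkm]
    calc _ ≤ B * (g w * (g v * (F v * G w))) := by gcongr; exact hk.upper v w
      _ = _ := by ring
  calc _ ≤ ∫⁻ v, ∫⁻ w, B * (g v * F v) * (g w * G w) := by gcongr; exact e1 _ _
    _ = ∫⁻ v, B * (g v * F v) * ∫⁻ w, (g w * G w) := by
      refine lintegral_congr fun v => lintegral_const_mul _ (hg.mul hG)
    _ = _ := by
      rw [lintegral_mul_const _ ((meas_mul hg hF).const_mul B), lintegral_const_mul _ (meas_mul hg hF)]

lemma measurable_gainE (hk : CollKernel N k δ cL B) {g : Rn N → ℝ≥0∞} (hg : Measurable g) :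
    Measurable (gainE k g) := by
  have hm0 := hk.meas_gain (φ := fun _ => 1) hg measurable_const
  simp only [mul_one] at hm0
  exact hm0.lintegral_prod_right'.lintegral_prod_right'

lemma measurable_lossE (hk : CollKernel N k δ cL B) {g : Rn N → ℝ≥0∞} (hg : Measurable g) :
    Measurable (lossE k g) := by
  have hm0 := hk.meas_loss (F := fun _ _ _ => 1) hg measurable_const
  simp only [mul_one] at hm0
  exact hm0.lintegral_prod_right'.lintegral_prod_right'

/-- The integrated Povzner inequality. The gain and loss moments stand on opposite sides because both
may be infinite. The coercive term carries the weight `ψ ⟨v⟩^{-2δ}`, the error term `ψ ⟨v⟩^{-2}`. -/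
lemma moment_ineq (hN : 2 ≤ N) (hk : CollKernel N k δ cL B) {κ : ℝ≥0∞}
    (hκ : ∀ e : Rn N, ‖e‖ = 1 → ∫⁻ σ, ENNReal.ofReal (1 - ⟪e, σ⟫ ^ 2) ∂(sphMeas N) = κ)
    {a A : ℝ} {ψ : ℝ → ℝ} (ha : 1 ≤ a) (hA : 1 ≤ A) (hψ : IsWeight a A ψ) (hψm : Measurable ψ)
    (hcL : 0 ≤ cL) {g : Rn N → ℝ≥0∞} (hg : Measurable g) :
    2 * (∫⁻ v, gainE k g v * ENNReal.ofReal (ψ (br v)))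
      + ENNReal.ofReal (splitConst a / 8 * cL) * κ * (∫⁻ w, g w * ENNReal.ofReal (br w)⁻¹)
        * (∫⁻ v, g v * ENNReal.ofReal (ψ (br v) * br v ^ (-δ))) ≤
    2 * (∫⁻ v, lossE k g v * ENNReal.ofReal (ψ (br v)))
      + 2 * ENNReal.ofReal (2 ^ A) * B * (∫⁻ v, g v * ENNReal.ofReal (ψ (br v) / br v))
        * (∫⁻ w, g w * ENNReal.ofReal (br w)) := by
  have hbr : Measurable (br (N := N)) := continuous_br.measurable
  have hφ : Measurable fun v : Rn N => ENNReal.ofReal (ψ (br v)) := (hψm.comp hbr).ennreal_ofReal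
  have hφx : Measurable fun v : Rn N => ENNReal.ofReal (ψ (br v) / br v) :=
    ((hψm.comp hbr).div hbr).ennreal_ofReal
  have hφd : Measurable fun v : Rn N => ENNReal.ofReal (ψ (br v) * br v ^ (-δ)) :=
    ((hψm.comp hbr).mul (hbr.pow_const _)).ennreal_ofReal
  set φ : Rn N → ℝ≥0∞ := fun v => ENNReal.ofReal (ψ (br v)) with hφdef
  have hφP : Measurable fun p : (Rn N × Rn N) × Rn N => φ (vP N p.1.1 p.1.2 p.2) :=
    hφ.comp measurable_vP3
  have hφSP : Measurable fun p : (Rn N × Rn N) × Rn N => φ (vSP N p.1.1 p.1.2 p.2) :=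
    hφ.comp measurable_vSP3
  have hφ1 : Measurable fun p : (Rn N × Rn N) × Rn N => φ p.1.1 := hφ.comp (by fun_prop)
  have hφ2 : Measurable fun p : (Rn N × Rn N) × Rn N => φ p.1.2 := hφ.comp (by fun_prop)
  set c0 := ENNReal.ofReal (splitConst a / 8) with hc0
  -- the pointwise inequality, in extended nonnegative form
  set E : Rn N → Rn N → ℝ≥0∞ := fun v w => ENNReal.ofReal (2 ^ A) *
    (ENNReal.ofReal (ψ (br v) / br v) * ENNReal.ofReal (br w) +
      ENNReal.ofReal (br v) * ENNReal.ofReal (ψ (br w) / br w)) with hE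
  have hEm : Measurable fun p : (Rn N × Rn N) × Rn N => E p.1.1 p.1.2 := by
    have m1 : Measurable fun p : (Rn N × Rn N) × Rn N => ENNReal.ofReal (ψ (br p.1.1) / br p.1.1) :=
      hφx.comp (by fun_prop : Measurable fun p : (Rn N × Rn N) × Rn N => p.1.1)
    have m2 : Measurable fun p : (Rn N × Rn N) × Rn N => ENNReal.ofReal (ψ (br p.1.2) / br p.1.2) :=
      hφx.comp (by fun_prop : Measurable fun p : (Rn N × Rn N) × Rn N => p.1.2)
    have m3 : Measurable fun p : (Rn N × Rn N) × Rn N => ENNReal.ofReal (br p.1.1) :=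
      hbr.ennreal_ofReal.comp (by fun_prop : Measurable fun p : (Rn N × Rn N) × Rn N => p.1.1)
    have m4 : Measurable fun p : (Rn N × Rn N) × Rn N => ENNReal.ofReal (br p.1.2) :=
      hbr.ennreal_ofReal.comp (by fun_prop : Measurable fun p : (Rn N × Rn N) × Rn N => p.1.2)
    exact ((m1.mul m4).add (m3.mul m2)).const_mul _
  have hpt : ∀ v w σ e : Rn N, ‖σ‖ = 1 → ‖e‖ = 1 → v + w = ‖v + w‖ • e →
      φ (vP N v w σ) + φ (vSP N v w σ) + c0 * ENNReal.ofReal (1 - ⟪e, σ⟫ ^ 2) * φ v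
        ≤ φ v + φ w + E v w := by
    intro v w σ e hσ he hve
    have h := povzner_collision ha hA hψ v w σ e hσ hve
    have n0 := fun u : Rn N => hψ.nonneg _ (br_pos u).le
    have nb := fun u : Rn N => (br_pos u).le
    have nq := fun u : Rn N => div_nonneg (n0 u) (nb u)
    have ns : 0 ≤ splitConst a / 8 := by have := splitConst_nonneg ha; positivity
    have ni : 0 ≤ 1 - ⟪e, σ⟫ ^ 2 := by
      have := abs_real_inner_le_norm e σ
      rw [he, hσ, one_mul] at this
      have := (sq_le_one_iff_abs_le_one _).2 this
      linarith
    have n2 : (0:ℝ) ≤ 2 ^ A := by positivity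
    simp only [hφdef, hE, hc0]
    rw [← ENNReal.ofReal_mul ns, ← ENNReal.ofReal_mul (mul_nonneg ns ni),
      ← ENNReal.ofReal_mul (nq v), ← ENNReal.ofReal_mul (nb v),
      ← ENNReal.ofReal_add (mul_nonneg (nq v) (nb w)) (mul_nonneg (nb v) (nq w)),
      ← ENNReal.ofReal_mul n2, ← ENNReal.ofReal_add (n0 _) (n0 _),
      ← ENNReal.ofReal_add (n0 _) (n0 _),
      ← ENNReal.ofReal_add (add_nonneg (n0 _) (n0 _)) (mul_nonneg (mul_nonneg ns ni) (n0 v)),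
      ← ENNReal.ofReal_add (add_nonneg (n0 _) (n0 _)) (mul_nonneg n2
        (add_nonneg (mul_nonneg (nq v) (nb w)) (mul_nonneg (nb v) (nq w))))]
    exact ENNReal.ofReal_le_ofReal (by linarith)
  -- integration in `σ`
  set T : Rn N → Rn N → ℝ≥0∞ := fun v w =>
    ENNReal.ofReal (splitConst a / 8 * cL) * κ * (g w * ENNReal.ofReal (br w)⁻¹)
      * (g v * ENNReal.ofReal (ψ (br v) * br v ^ (-δ))) with hT
  have hσint : ∀ v w, (∫⁻ σ, k v w σ * (g w * g v) * (φ (vP N v w σ) + φ (vSP N v w σ))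
        ∂(sphMeas N)) + T v w
      ≤ ∫⁻ σ, k v w σ * (g w * g v) * (φ v + φ w + E v w) ∂(sphMeas N) := by
    intro v w
    obtain ⟨e, he, hve⟩ : ∃ e : Rn N, ‖e‖ = 1 ∧ v + w = ‖v + w‖ • e := by
      by_cases h0 : v + w = 0
      · refine ⟨EuclideanSpace.single (⟨0, by omega⟩ : Fin N) 1, by simp, by simp [h0]⟩
      · refine ⟨‖v + w‖⁻¹ • (v + w), ?_, ?_⟩
        · rw [norm_smul, norm_inv, norm_norm, inv_mul_cancel₀ (norm_ne_zero_iff.2 h0)]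
        · rw [smul_smul, mul_inv_cancel₀ (norm_ne_zero_iff.2 h0), one_smul]
    have m1 : Measurable fun σ => k v w σ * (g w * g v) * (φ (vP N v w σ) + φ (vSP N v w σ)) :=
      (hk.meas_loss hg (F := fun v w σ => φ (vP N v w σ) + φ (vSP N v w σ))
        (hφP.add hφSP)).comp (measurable_prodMk_left (x := (v, w)))
    have hTle : T v w ≤ ∫⁻ σ, k v w σ * (g w * g v) *
        (c0 * ENNReal.ofReal (1 - ⟪e, σ⟫ ^ 2) * φ v) ∂(sphMeas N) := by
      have hm : Measurable fun σ : Rn N => ENNReal.ofReal (1 - ⟪e, σ⟫ ^ 2) := by fun_prop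
      have ns : 0 ≤ splitConst a / 8 := by have := splitConst_nonneg ha; positivity
      calc T v w = ∫⁻ σ, (ENNReal.ofReal (cL * br v ^ (-δ) * (br w)⁻¹) * (g w * g v) * c0 * φ v)
            * ENNReal.ofReal (1 - ⟪e, σ⟫ ^ 2) ∂(sphMeas N) := by
            rw [lintegral_const_mul _ hm, hκ e he]
            simp only [hT, hφdef, hc0]
            rw [ENNReal.ofReal_mul ns, ENNReal.ofReal_mul (hψ.nonneg _ (br_pos v).le),
              ENNReal.ofReal_mul (mul_nonneg hcL (Real.rpow_nonneg (br_pos v).le _)),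
              ENNReal.ofReal_mul hcL]
            ring
        _ ≤ _ := by
            refine lintegral_mono fun σ => ?_
            calc _ ≤ (k v w σ * (g w * g v) * c0 * φ v) * ENNReal.ofReal (1 - ⟪e, σ⟫ ^ 2) := by
                  gcongr; exact hk.lower v w σ
              _ = _ := by ring
    calc _ ≤ (∫⁻ σ, k v w σ * (g w * g v) * (φ (vP N v w σ) + φ (vSP N v w σ)) ∂(sphMeas N))
          + ∫⁻ σ, k v w σ * (g w * g v) *
            (c0 * ENNReal.ofReal (1 - ⟪e, σ⟫ ^ 2) * φ v) ∂(sphMeas N) := by gcongr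
      _ = ∫⁻ σ, k v w σ * (g w * g v) * (φ (vP N v w σ) + φ (vSP N v w σ)
            + c0 * ENNReal.ofReal (1 - ⟪e, σ⟫ ^ 2) * φ v) ∂(sphMeas N) := by
          rw [← lintegral_add_left m1]
          simp_rw [mul_add]
      _ ≤ _ := by
          refine lintegral_mono_ae ?_
          filter_upwards [sphMeas_ae N] with σ hσ
          exact mul_le_mul_right (hpt v w σ e hσ he hve) _
  -- integration in `v` and `w`
  have hTint : ∫⁻ v, ∫⁻ w, T v w = ENNReal.ofReal (splitConst a / 8 * cL) * κ
      * (∫⁻ w, g w * ENNReal.ofReal (br w)⁻¹)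
        * (∫⁻ v, g v * ENNReal.ofReal (ψ (br v) * br v ^ (-δ))) := by
    have hi : Measurable fun w : Rn N => g w * ENNReal.ofReal (br w)⁻¹ :=
      hg.mul hbr.inv.ennreal_ofReal
    simp only [hT]
    simp_rw [lintegral_mul_const _ (hi.const_mul _), lintegral_const_mul _ hi]
    rw [lintegral_const_mul _ (meas_mul hg hφd)]
  have mS : Measurable fun p : (Rn N × Rn N) × Rn N => k p.1.1 p.1.2 p.2 * (g p.1.2 * g p.1.1)
      * (φ (vP N p.1.1 p.1.2 p.2) + φ (vSP N p.1.1 p.1.2 p.2)) :=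
    hk.meas_loss hg (F := fun v w σ => φ (vP N v w σ) + φ (vSP N v w σ)) (hφP.add hφSP)
  have hall : (collInt k g fun v w σ => φ (vP N v w σ) + φ (vSP N v w σ)) + ∫⁻ v, ∫⁻ w, T v w
      ≤ collInt k g fun v w _ => φ v + φ w + E v w := by
    unfold collInt
    rw [← lintegral_add_left mS.lintegral_prod_right'.lintegral_prod_right']
    refine lintegral_mono fun v => ?_
    have mSv : Measurable fun w => ∫⁻ σ, k v w σ * (g w * g v) *
        (φ (vP N v w σ) + φ (vSP N v w σ)) ∂(sphMeas N) :=
      mS.lintegral_prod_right'.comp (measurable_prodMk_left (x := v))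
    dsimp only
    rw [← lintegral_add_left mSv]
    exact lintegral_mono fun w => hσint v w
  have hadd : ∀ {F G : Rn N → Rn N → Rn N → ℝ≥0∞},
      (Measurable fun p : (Rn N × Rn N) × Rn N => F p.1.1 p.1.2 p.2) →
      (collInt k g fun v w σ => F v w σ + G v w σ) = collInt k g F + collInt k g G := by
    intro F G hF
    have mF := hk.meas_loss hg hF
    unfold collInt
    rw [← lintegral_add_left mF.lintegral_prod_right'.lintegral_prod_right']
    refine lintegral_congr fun v => ?_
    have mFv : Measurable fun w => ∫⁻ σ, k v w σ * (g w * g v) * F v w σ ∂(sphMeas N) :=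
      mF.lintegral_prod_right'.comp (measurable_prodMk_left (x := v))
    dsimp only
    rw [← lintegral_add_left mFv]
    refine lintegral_congr fun w => ?_
    have mFw : Measurable fun σ => k v w σ * (g w * g v) * F v w σ :=
      mF.comp (measurable_prodMk_left (x := (v, w)))
    rw [← lintegral_add_left mFw]
    simp_rw [mul_add]
  have s1 : (collInt k g fun v w σ => φ (vSP N v w σ)) = collInt k g fun v w σ => φ (vP N v w σ) := by
    rw [collInt_symm hk hg hφSP]; simp_rw [← vP_symm, neg_neg]
  have s2 : (collInt k g fun v w σ => φ w) = collInt k g fun v w σ => φ v := by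
    rw [collInt_symm hk hg hφ2]
  have hx1 := (hbr.ennreal_ofReal)
  have hEle : (collInt k g fun v w _ => E v w) ≤ 2 * ENNReal.ofReal (2 ^ A) * B *
      (∫⁻ v, g v * ENNReal.ofReal (ψ (br v) / br v)) * (∫⁻ w, g w * ENNReal.ofReal (br w)) := by
    have m5 : Measurable fun p : (Rn N × Rn N) × Rn N => ENNReal.ofReal (2 ^ A) *
        ENNReal.ofReal (ψ (br p.1.1) / br p.1.1) * ENNReal.ofReal (br p.1.2) :=
      ((hφx.comp (by fun_prop : Measurable fun p : (Rn N × Rn N) × Rn N => p.1.1)).const_mul _).mul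
        (hx1.comp (by fun_prop : Measurable fun p : (Rn N × Rn N) × Rn N => p.1.2))
    have hs : (fun v w (_ : Rn N) => E v w) = fun v w _ =>
        ENNReal.ofReal (2 ^ A) * ENNReal.ofReal (ψ (br v) / br v) * ENNReal.ofReal (br w)
        + ENNReal.ofReal (2 ^ A) * ENNReal.ofReal (br v) * ENNReal.ofReal (ψ (br w) / br w) := by
      funext v w σ; simp only [hE]; ring
    rw [hs, hadd m5]
    have h1 := collInt_le hk hg (hφx.const_mul (ENNReal.ofReal (2 ^ A))) hx1
    have h2 := collInt_le hk hg (hx1.const_mul (ENNReal.ofReal (2 ^ A))) hφx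
    have c1 : ∫⁻ v, g v * (ENNReal.ofReal (2 ^ A) * ENNReal.ofReal (ψ (br v) / br v))
        = ENNReal.ofReal (2 ^ A) * ∫⁻ v, g v * ENNReal.ofReal (ψ (br v) / br v) := by
      rw [← lintegral_const_mul _ (meas_mul hg hφx)]; congr 1; ext v; ring
    have c2 : ∫⁻ v, g v * (ENNReal.ofReal (2 ^ A) * ENNReal.ofReal (br v))
        = ENNReal.ofReal (2 ^ A) * ∫⁻ v, g v * ENNReal.ofReal (br v) := by
      rw [← lintegral_const_mul _ (meas_mul hg hx1)]; congr 1; ext v; ring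
    rw [c1] at h1
    rw [c2] at h2
    refine (add_le_add h1 h2).trans (le_of_eq ?_)
    ring
  rw [gain_moment hN hk hg hφ, loss_moment hk hg, ← hTint]
  rw [hadd hφP, s1] at hall
  have e3 := hadd (F := fun v w σ => φ v + φ w) (G := fun v w σ => E v w) (hφ1.add hφ2)
  have e4 := hadd (F := fun v w σ => φ v) (G := fun v w σ => φ w) hφ1
  rw [e3, e4, s2] at hall
  rw [two_mul, two_mul]
  exact hall.trans (add_le_add le_rfl hEle)

end

/-! ### The collision kernel -/

lemma exists_unit {N : ℕ} (hN : 2 ≤ N) : ∃ e : Rn N, ‖e‖ = 1 :=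
  ⟨EuclideanSpace.single (⟨0, by omega⟩ : Fin N) 1, by simp⟩

/-- The Hausdorff measure of the sphere is finite, since `b ≥ b₀ > 0` has a finite integral against it. -/
lemma sphMeas_finite {N : ℕ} (hN : 2 ≤ N) {Φ b : ℝ → ℝ} {γ : ℝ} (hK : KernelOK N Φ b γ) :
    IsFiniteMeasure (sphMeas N) := by
  obtain ⟨u, hu⟩ := exists_unit hN
  obtain ⟨b₀, hb₀, hb⟩ := hK.b_pos
  have h := (hK.b_integrable u hu).lintegral_lt_top
  have h2 : ENNReal.ofReal b₀ * sphMeas N Set.univ ≤ ∫⁻ σ, ENNReal.ofReal (b ⟪u, σ⟫) ∂(sphMeas N) := by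
    rw [← lintegral_const]
    exact lintegral_mono fun σ => ENNReal.ofReal_le_ofReal (hb _)
  refine ⟨lt_top_of_mul_ne_top_right (h2.trans_lt h).ne ?_⟩
  simpa using hb₀

lemma sph_inner_const {N : ℕ} {F : ℝ → ℝ≥0∞} (hF : Measurable F) {u u' : Rn N} (h : ‖u‖ = ‖u'‖) :
    ∫⁻ σ, F ⟪u, σ⟫ ∂(sphMeas N) = ∫⁻ σ, F ⟪u', σ⟫ ∂(sphMeas N) := by
  obtain ⟨L, hL⟩ := exists_isometry h
  rw [← hL]
  conv_rhs => rw [← sph_map_isometry L]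
  have m : Measurable fun σ => F ⟪L u, σ⟫ :=
    hF.comp (by fun_prop : Measurable fun σ : Rn N => ⟪L u, σ⟫)
  rw [lintegral_map m L.continuous.measurable]
  simp_rw [LinearIsometryEquiv.inner_map_map]

/-- The angular integral of `1 - ⟪e, σ⟫²` does not depend on the unit vector `e`. It is positive: otherwise
almost every `σ` would satisfy `⟪e₀, σ⟫² = ⟪e₁, σ⟫² = 1` for two orthonormal vectors. -/
lemma exists_kappa {N : ℕ} (hN : 2 ≤ N) [IsFiniteMeasure (sphMeas N)] (hS : sphMeas N ≠ 0) :
    ∃ κ : ℝ≥0∞, κ ≠ 0 ∧ κ ≠ ⊤ ∧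
      ∀ e : Rn N, ‖e‖ = 1 → ∫⁻ σ, ENNReal.ofReal (1 - ⟪e, σ⟫ ^ 2) ∂(sphMeas N) = κ := by
  set i : Fin N := ⟨0, by omega⟩
  set j : Fin N := ⟨1, by omega⟩
  have hij : i ≠ j := by simp [i, j]
  set e₀ : Rn N := EuclideanSpace.single i 1 with he₀
  set e₁ : Rn N := EuclideanSpace.single j 1 with he₁
  have hF : Measurable fun r : ℝ => ENNReal.ofReal (1 - r ^ 2) := by fun_prop
  have hc : ∀ e : Rn N, ‖e‖ = 1 → ∫⁻ σ, ENNReal.ofReal (1 - ⟪e, σ⟫ ^ 2) ∂(sphMeas N)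
      = ∫⁻ σ, ENNReal.ofReal (1 - ⟪e₀, σ⟫ ^ 2) ∂(sphMeas N) := fun e he =>
    sph_inner_const hF (by rw [he]; simp [he₀])
  refine ⟨_, ?_, ?_, hc⟩
  · intro h0
    have h1 := hc e₁ (by simp [he₁])
    rw [h0] at h1
    rw [lintegral_eq_zero_iff (by fun_prop)] at h0
    rw [lintegral_eq_zero_iff (by fun_prop)] at h1
    apply hS
    rw [← ae_eq_bot, ← Filter.eventually_false_iff_eq_bot]
    filter_upwards [h0, h1, sphMeas_ae N] with σ h0 h1 hσ
    simp only [Pi.zero_apply, ENNReal.ofReal_eq_zero, he₀, he₁, EuclideanSpace.inner_single_left,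
      map_one, one_mul] at h0 h1
    have h2 := EuclideanSpace.norm_sq_eq σ
    have h3 : ∑ l ∈ ({i, j} : Finset (Fin N)), ‖σ l‖ ^ 2 ≤ ∑ l, ‖σ l‖ ^ 2 :=
      Finset.sum_le_sum_of_subset_of_nonneg (Finset.subset_univ _) fun _ _ _ => by positivity
    rw [Finset.sum_pair hij, ← h2, hσ] at h3
    simp only [Real.norm_eq_abs, sq_abs] at h3
    linarith
  · refine ne_of_lt (lt_of_le_of_lt (lintegral_mono (g := fun _ => 1) fun σ => ?_) ?_)
    · rw [← ENNReal.ofReal_one]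
      exact ENNReal.ofReal_le_ofReal (by nlinarith [sq_nonneg ⟪e₀, σ⟫])
    · rw [lintegral_const, one_mul]; exact measure_lt_top _ _

/-- The collision kernel `Φ(|v - w|) b(cos θ)`, with values in `[0,∞]`. -/
def kerE (N : ℕ) (Φ b : ℝ → ℝ) (v w σ : Rn N) : ℝ≥0∞ :=
  ENNReal.ofReal (Φ ‖v - w‖ * b (cosTheta N v w σ))

lemma measurable_cosTheta {N : ℕ} :
    Measurable fun p : (Rn N × Rn N) × Rn N => cosTheta N p.1.1 p.1.2 p.2 := by
  unfold cosTheta; fun_prop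

lemma cosTheta_eq {N : ℕ} (v w σ : Rn N) : cosTheta N v w σ = ⟪‖v - w‖⁻¹ • (v - w), σ⟫ := by
  rw [cosTheta, real_inner_smul_left, real_inner_comm, div_eq_inv_mul]

/-- From `(1 + |v - w|)² ≤ 4 ⟨v⟩² ⟨w⟩²` and `-2 < γ ≤ 0`. -/
lemma kernel_lower {N : ℕ} {γ : ℝ} (hγ : γ ∈ Set.Ioc (-2 : ℝ) 0) (v w : Rn N) :
    (4:ℝ) ^ (γ / 2) * br v ^ (γ / 2) * (br w)⁻¹ ≤ (1 + ‖v - w‖) ^ γ := by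
  have hv := one_le_br v
  have hw := one_le_br w
  have h1 : (1 + ‖v - w‖) ^ 2 ≤ 4 * br v * br w := by
    have h2 := parallelogram_law_with_norm ℝ v w
    unfold br
    nlinarith [sq_nonneg (1 - ‖v - w‖), sq_nonneg ‖v + w‖, sq_nonneg ‖v‖, sq_nonneg ‖w‖,
      mul_nonneg (sq_nonneg ‖v‖) (sq_nonneg ‖w‖)]
  have hp : (0:ℝ) < 1 + ‖v - w‖ := by positivity
  have h3 : (1 + ‖v - w‖) ^ γ = ((1 + ‖v - w‖) ^ 2) ^ (γ / 2) := by
    rw [← Real.rpow_natCast, ← Real.rpow_mul hp.le]; congr 1; push_cast; ring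
  rw [h3]
  calc (4:ℝ) ^ (γ / 2) * br v ^ (γ / 2) * (br w)⁻¹
      ≤ (4:ℝ) ^ (γ / 2) * br v ^ (γ / 2) * br w ^ (γ / 2) := by
        rw [← Real.rpow_neg_one]
        have := br_pos v
        gcongr
        linarith [hγ.1]
    _ = (4 * br v * br w) ^ (γ / 2) := by
        rw [Real.mul_rpow (by positivity) (by positivity), Real.mul_rpow (by norm_num) (by positivity)]
    _ ≤ _ := Real.rpow_le_rpow_of_nonpos (by positivity) h1 (by linarith [hγ.2])

lemma collKernel_kerE {N : ℕ} (hN : 2 ≤ N) [IsFiniteMeasure (sphMeas N)] {Φ b : ℝ → ℝ} {γ : ℝ}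
    (hK : KernelOK N Φ b γ) (hb : Measurable b) :
    ∃ cL : ℝ, 0 < cL ∧ ∃ B : ℝ≥0∞, B ≠ ⊤ ∧ CollKernel N (kerE N Φ b) (-γ / 2) cL B := by
  obtain ⟨cΦ, CΦ, hc, hC, hΦ⟩ := hK.phi_bounds
  obtain ⟨b₀, hb₀, hbb⟩ := hK.b_pos
  obtain ⟨e, he⟩ := exists_unit hN
  have hcos := measurable_cosTheta (N := N)
  have hΦpos : ∀ z : Rn N, 0 ≤ Φ ‖z‖ := fun z => le_trans (by positivity) (hΦ z).1
  refine ⟨cΦ * 4 ^ (γ / 2) * b₀, by positivity,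
    ENNReal.ofReal CΦ * ((∫⁻ σ, ENNReal.ofReal (b ⟪e, σ⟫) ∂(sphMeas N))
      + ENNReal.ofReal (b 0) * sphMeas N Set.univ), ?_, ?_, ?_, ?_, ?_, ?_⟩
  · refine ENNReal.mul_ne_top ENNReal.ofReal_ne_top (ENNReal.add_ne_top.2 ⟨?_, ?_⟩)
    · exact (hK.b_integrable e he).lintegral_lt_top.ne
    · exact ENNReal.mul_ne_top ENNReal.ofReal_ne_top (measure_ne_top _ _)
  · have h1 : Measurable fun p : (Rn N × Rn N) × Rn N => Φ ‖p.1.1 - p.1.2‖ :=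
      hK.phi_smooth.continuous.measurable.comp (by fun_prop)
    exact (h1.mul (hb.comp hcos)).ennreal_ofReal
  · intro v w σ hσ
    have h1 : vP N v w σ - vSP N v w σ = ‖v - w‖ • σ := by simp only [vP, vSP]; module
    have h2 : ‖vP N v w σ - vSP N v w σ‖ = ‖v - w‖ := by rw [h1, norm_smul, hσ]; simp
    have h3 : cosTheta N (vP N v w σ) (vSP N v w σ) (‖v - w‖⁻¹ • (v - w)) = cosTheta N v w σ := by
      rw [cosTheta, h2, h1, cosTheta]
      rcases eq_or_ne (v - w) 0 with h | h
      · simp [h]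
      · have := norm_ne_zero_iff.2 h
        rw [real_inner_smul_left, real_inner_smul_right, real_inner_comm]
        field_simp
    rw [kerE, kerE, h3, h2]
  · intro v w σ
    have h3 : cosTheta N w v (-σ) = cosTheta N v w σ := by
      rw [cosTheta, cosTheta, norm_sub_rev w v, ← neg_sub v w, inner_neg_neg]
    rw [kerE, kerE, h3, norm_sub_rev w v]
  · intro v w
    have hk : ∀ σ, kerE N Φ b v w σ = ENNReal.ofReal (Φ ‖v - w‖) * ENNReal.ofReal (b (cosTheta N v w σ)) :=
      fun σ => ENNReal.ofReal_mul (hΦpos _)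
    have hm : Measurable fun σ => ENNReal.ofReal (b (cosTheta N v w σ)) :=
      (hb.comp (hcos.comp (measurable_prodMk_left (x := (v, w))))).ennreal_ofReal
    simp_rw [hk]
    rw [lintegral_const_mul _ hm]
    gcongr
    · refine (hΦ _).2.trans (mul_le_of_le_one_right hC.le ?_)
      refine Real.rpow_le_one_of_one_le_of_nonpos ?_ hK.gamma_mem.2
      linarith [norm_nonneg (v - w)]
    · rcases eq_or_ne (v - w) 0 with h | h
      · simp [cosTheta, h]
      · refine le_trans (le_of_eq ?_) le_self_add
        simp_rw [cosTheta_eq]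
        refine sph_inner_const hb.ennreal_ofReal ?_
        rw [norm_smul, norm_inv, norm_norm, inv_mul_cancel₀ (norm_ne_zero_iff.2 h), he]
  · intro v w σ
    refine ENNReal.ofReal_le_ofReal ?_
    have h1 := kernel_lower hK.gamma_mem v w
    have h2 := (hΦ (v - w)).1
    have e1 : -(-γ / 2) = γ / 2 := by ring
    rw [e1]
    calc cΦ * 4 ^ (γ / 2) * b₀ * br v ^ (γ / 2) * (br w)⁻¹
        = cΦ * (4 ^ (γ / 2) * br v ^ (γ / 2) * (br w)⁻¹) * b₀ := by ring
      _ ≤ cΦ * (1 + ‖v - w‖) ^ γ * b₀ := by gcongr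
      _ ≤ Φ ‖v - w‖ * b (cosTheta N v w σ) := mul_le_mul h2 (hbb _) hb₀.le (hΦpos _)

/-- The Bochner integral defining `Q(g,g)(v)` is gain minus loss wherever both are finite. -/
lemma Qop_eq {N : ℕ} [IsFiniteMeasure (sphMeas N)] {Φ b : ℝ → ℝ}
    (hΦ : Continuous Φ) (hb : Measurable b)
    (hpos : ∀ (z : Rn N) x, 0 ≤ Φ ‖z‖ * b x) {g : Rn N → ℝ} (hg : Measurable g)
    (hg0 : ∀ v, 0 ≤ g v) (v : Rn N)
    (h1 : gainE (kerE N Φ b) (fun v => ENNReal.ofReal (g v)) v ≠ ⊤)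
    (h2 : lossE (kerE N Φ b) (fun v => ENNReal.ofReal (g v)) v ≠ ⊤) :
    Qop N Φ b g g v = (gainE (kerE N Φ b) (fun v => ENNReal.ofReal (g v)) v).toReal
      - (lossE (kerE N Φ b) (fun v => ENNReal.ofReal (g v)) v).toReal := by
  have mk : Measurable fun p : Rn N × Rn N => Φ ‖v - p.1‖ * b (cosTheta N v p.1 p.2) := by
    have m1 : Measurable fun p : Rn N × Rn N => Φ ‖v - p.1‖ := hΦ.measurable.comp (by fun_prop)
    have m2 : Measurable fun p : Rn N × Rn N => cosTheta N v p.1 p.2 := by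
      unfold cosTheta; fun_prop
    exact m1.mul (hb.comp m2)
  have mG : Measurable fun p : Rn N × Rn N => Φ ‖v - p.1‖ * b (cosTheta N v p.1 p.2)
      * (g (vSP N v p.1 p.2) * g (vP N v p.1 p.2)) := by
    have m2 : Measurable fun p : Rn N × Rn N => vSP N v p.1 p.2 := by
      unfold vSP; fun_prop
    have m3 : Measurable fun p : Rn N × Rn N => vP N v p.1 p.2 := by
      unfold vP; fun_prop
    have m4 : Measurable fun p : Rn N × Rn N => g (vSP N v p.1 p.2) := hg.comp m2
    have m5 : Measurable fun p : Rn N × Rn N => g (vP N v p.1 p.2) := hg.comp m3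
    exact mk.mul (m4.mul m5)
  have mL : Measurable fun p : Rn N × Rn N => Φ ‖v - p.1‖ * b (cosTheta N v p.1 p.2)
      * (g p.1 * g v) := by
    have m4 : Measurable fun p : Rn N × Rn N => g p.1 := hg.comp measurable_fst
    exact mk.mul (m4.mul_const _)
  have nG : ∀ p : Rn N × Rn N, 0 ≤ Φ ‖v - p.1‖ * b (cosTheta N v p.1 p.2)
      * (g (vSP N v p.1 p.2) * g (vP N v p.1 p.2)) := fun p =>
    mul_nonneg (hpos _ _) (mul_nonneg (hg0 _) (hg0 _))
  have nL : ∀ p : Rn N × Rn N, 0 ≤ Φ ‖v - p.1‖ * b (cosTheta N v p.1 p.2)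
      * (g p.1 * g v) := fun p => mul_nonneg (hpos _ _) (mul_nonneg (hg0 _) (hg0 _))
  have eG : ∫⁻ p : Rn N × Rn N, ENNReal.ofReal (Φ ‖v - p.1‖ * b (cosTheta N v p.1 p.2)
      * (g (vSP N v p.1 p.2) * g (vP N v p.1 p.2))) ∂(volume.prod (sphMeas N))
      = gainE (kerE N Φ b) (fun v => ENNReal.ofReal (g v)) v := by
    rw [lintegral_prod _ mG.ennreal_ofReal.aemeasurable, gainE]
    refine lintegral_congr fun w => lintegral_congr fun σ => ?_
    rw [ENNReal.ofReal_mul (hpos _ _), ENNReal.ofReal_mul (hg0 _), kerE]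
  have eL : ∫⁻ p : Rn N × Rn N, ENNReal.ofReal (Φ ‖v - p.1‖ * b (cosTheta N v p.1 p.2)
      * (g p.1 * g v)) ∂(volume.prod (sphMeas N))
      = lossE (kerE N Φ b) (fun v => ENNReal.ofReal (g v)) v := by
    rw [lintegral_prod _ mL.ennreal_ofReal.aemeasurable, lossE]
    refine lintegral_congr fun w => lintegral_congr fun σ => ?_
    rw [ENNReal.ofReal_mul (hpos _ _), ENNReal.ofReal_mul (hg0 _), kerE]
  have iG : Integrable (fun p : Rn N × Rn N => Φ ‖v - p.1‖ * b (cosTheta N v p.1 p.2)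
      * (g (vSP N v p.1 p.2) * g (vP N v p.1 p.2))) (volume.prod (sphMeas N)) := by
    refine ⟨mG.aestronglyMeasurable, ?_⟩
    rw [hasFiniteIntegral_iff_ofReal (.of_forall nG), eG]
    exact h1.lt_top
  have iL : Integrable (fun p : Rn N × Rn N => Φ ‖v - p.1‖ * b (cosTheta N v p.1 p.2)
      * (g p.1 * g v)) (volume.prod (sphMeas N)) := by
    refine ⟨mL.aestronglyMeasurable, ?_⟩
    rw [hasFiniteIntegral_iff_ofReal (.of_forall nL), eL]
    exact h2.lt_top
  rw [← eG, ← eL, ← integral_eq_lintegral_of_nonneg_ae (.of_forall nG) mG.aestronglyMeasurable,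
    ← integral_eq_lintegral_of_nonneg_ae (.of_forall nL) mL.aestronglyMeasurable,
    ← integral_sub iG iL]
  refine Eq.trans ?_ (integral_prod _ (iG.sub iL)).symm
  simp only [Qop, Pi.sub_apply, mul_sub]

lemma Qop_congr_b {N : ℕ} {Φ b b' : ℝ → ℝ}
    (h : ∀ u : Rn N, ‖u‖ = 1 → ∀ᵐ σ ∂(sphMeas N), b ⟪u, σ⟫ = b' ⟪u, σ⟫) (g : Rn N → ℝ) (v : Rn N) :
    Qop N Φ b g g v = Qop N Φ b' g g v := by
  unfold Qop
  congr 1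
  ext w
  rcases eq_or_ne (v - w) 0 with h0 | h0
  · have hvw : v = w := sub_eq_zero.1 h0
    subst hvw
    have e1 : ∀ σ, vP N v v σ = v := fun σ => by simp only [vP, sub_self, norm_zero]; module
    have e2 : ∀ σ, vSP N v v σ = v := fun σ => by simp only [vSP, sub_self, norm_zero]; module
    simp [e1, e2]
  · refine integral_congr_ae ?_
    filter_upwards [h (‖v - w‖⁻¹ • (v - w)) (by
      rw [norm_smul, norm_inv, norm_norm, inv_mul_cancel₀ (norm_ne_zero_iff.2 h0)])] with σ hσ
    simp only [cosTheta_eq]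
    rw [hσ]

/-! ### Solutions and the evolution at a fixed velocity -/

/-- Integration by parts for primitives of integrable functions. -/
lemma ac_parts {T u₀ w₀ : ℝ} {q p : ℝ → ℝ} (hq : IntervalIntegrable q volume 0 T)
    (hp : IntervalIntegrable p volume 0 T) :
    ∫ t in (0:ℝ)..T, (q t * (w₀ + ∫ τ in (0:ℝ)..t, p τ) + (u₀ + ∫ τ in (0:ℝ)..t, q τ) * p t)
      = (u₀ + ∫ τ in (0:ℝ)..T, q τ) * (w₀ + ∫ τ in (0:ℝ)..T, p τ) - u₀ * w₀ := by
  have hc : ∀ c : ℝ, AbsolutelyContinuousOnInterval (fun _ : ℝ => c) 0 T := fun c =>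
    contDiff_const.contDiffOn.absolutelyContinuousOnInterval
  have a1 := (hc u₀).fun_add (hq.absolutelyContinuousOnInterval_intervalIntegral (c := 0) (by simp))
  have a2 := (hc w₀).fun_add (hp.absolutelyContinuousOnInterval_intervalIntegral (c := 0) (by simp))
  have h := a1.integral_deriv_mul_eq_sub a2
  simp only [intervalIntegral.integral_same, add_zero] at h
  rw [← h]
  refine intervalIntegral.integral_congr_ae ?_
  filter_upwards [hq.ae_hasDerivAt_integral, hp.ae_hasDerivAt_integral] with t h1 h2 ht
  have ht' := Set.uIoc_subset_uIcc ht
  rw [((h1 ht' 0 (by simp)).const_add u₀).deriv, ((h2 ht' 0 (by simp)).const_add w₀).deriv]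

/-- The evolution of `u φ` at a fixed velocity, where `u` has rate `G - L` and `φ` has derivative
`Dp - Dm`. Negative terms are moved across, so that every term lies in `[0,∞]`. -/
lemma weak_scalar {T u₀ : ℝ} (hT : 0 ≤ T) {u q φ Dp Dm : ℝ → ℝ} {G L : ℝ → ℝ≥0∞}
    (hGm : Measurable G) (hLm : Measurable L)
    (hG : ∫⁻ τ in Set.Ioc 0 T, G τ ≠ ⊤) (hL : ∫⁻ τ in Set.Ioc 0 T, L τ ≠ ⊤)
    (hq : ∀ᵐ τ ∂(volume.restrict (Set.Ioc 0 T)), q τ = (G τ).toReal - (L τ).toReal)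
    (hu : ∀ t, 0 ≤ t → u t = u₀ + ∫ τ in Set.Ioc 0 t, q τ) (hu0 : ∀ t, 0 ≤ u t)
    (hφ0 : ∀ t ∈ Set.Icc 0 T, 0 ≤ φ t)
    (hφ : ∀ t ∈ Set.Icc 0 T, HasDerivAt φ (Dp t - Dm t) t)
    (hDp : ContinuousOn Dp (Set.Icc 0 T)) (hDm : ContinuousOn Dm (Set.Icc 0 T))
    (hDp0 : ∀ t ∈ Set.Icc 0 T, 0 ≤ Dp t) (hDm0 : ∀ t ∈ Set.Icc 0 T, 0 ≤ Dm t) :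
    ENNReal.ofReal (u T) * ENNReal.ofReal (φ T) + ∫⁻ τ in Set.Ioc 0 T,
        (L τ * ENNReal.ofReal (φ τ) + ENNReal.ofReal (u τ) * ENNReal.ofReal (Dm τ))
      = ENNReal.ofReal u₀ * ENNReal.ofReal (φ 0) + ∫⁻ τ in Set.Ioc 0 T,
        (G τ * ENNReal.ofReal (φ τ) + ENNReal.ofReal (u τ) * ENNReal.ofReal (Dp τ)) := by
  have huI : Set.uIcc 0 T = Set.Icc 0 T := Set.uIcc_of_le hT
  have iG : IntervalIntegrable (fun τ => (G τ).toReal) volume 0 T :=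
    (intervalIntegrable_iff_integrableOn_Ioc_of_le hT).2
      (integrable_toReal_of_lintegral_ne_top hGm.aemeasurable hG)
  have iL : IntervalIntegrable (fun τ => (L τ).toReal) volume 0 T :=
    (intervalIntegrable_iff_integrableOn_Ioc_of_le hT).2
      (integrable_toReal_of_lintegral_ne_top hLm.aemeasurable hL)
  have iq : IntervalIntegrable q volume 0 T := by
    refine (iG.sub iL).congr_ae ?_
    rw [Set.uIoc_of_le hT]
    filter_upwards [hq] with τ h using h.symm
  have hφc : ContinuousOn φ (Set.Icc 0 T) := fun t ht => (hφ t ht).continuousAt.continuousWithinAt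
  have ip : IntervalIntegrable (fun t => Dp t - Dm t) volume 0 T := by
    refine ContinuousOn.intervalIntegrable ?_
    rw [huI]; exact hDp.sub hDm
  have hu' : ∀ t ∈ Set.Icc 0 T, u t = u₀ + ∫ τ in (0:ℝ)..t, q τ := fun t ht => by
    rw [hu t ht.1, intervalIntegral.integral_of_le ht.1]
  have hφ' : ∀ t ∈ Set.Icc 0 T, φ t = φ 0 + ∫ τ in (0:ℝ)..t, (Dp τ - Dm τ) := fun t ht => by
    rw [intervalIntegral.integral_eq_sub_of_hasDerivAt (f := φ)]
    · ring
    · intro x hx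
      rw [Set.uIcc_of_le ht.1] at hx
      exact hφ x ⟨hx.1, hx.2.trans ht.2⟩
    · refine ip.mono_set ?_
      rw [huI, Set.uIcc_of_le ht.1]
      exact Set.Icc_subset_Icc_right ht.2
  have huc : ContinuousOn u (Set.Icc 0 T) := by
    have h1 := intervalIntegral.continuousOn_primitive_interval' iq (Set.left_mem_uIcc)
    rw [huI] at h1
    exact (continuousOn_const.add h1).congr hu'
  have key := ac_parts (u₀ := u₀) (w₀ := φ 0) iq ip
  have hTm : T ∈ Set.Icc 0 T := ⟨hT, le_rfl⟩
  rw [← hu' T hTm, ← hφ' T hTm] at key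
  have e1 : ∫ t in (0:ℝ)..T, (q t * (φ 0 + ∫ τ in (0:ℝ)..t, (Dp τ - Dm τ))
        + (u₀ + ∫ τ in (0:ℝ)..t, q τ) * (Dp t - Dm t))
      = (∫ t in (0:ℝ)..T, ((G t).toReal * φ t + u t * Dp t))
        - ∫ t in (0:ℝ)..T, ((L t).toReal * φ t + u t * Dm t) := by
    rw [← intervalIntegral.integral_sub]
    · refine intervalIntegral.integral_congr_ae ?_
      rw [ae_restrict_iff' measurableSet_Ioc] at hq
      filter_upwards [hq] with t h1 ht
      rw [Set.uIoc_of_le hT] at ht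
      have ht' : t ∈ Set.Icc 0 T := ⟨ht.1.le, ht.2⟩
      rw [← hφ' t ht', ← hu' t ht', h1 ht]
      ring
    · refine (iG.mul_continuousOn (by rwa [huI])).add (ContinuousOn.intervalIntegrable ?_)
      rw [huI]; exact huc.mul hDp
    · refine (iL.mul_continuousOn (by rwa [huI])).add (ContinuousOn.intervalIntegrable ?_)
      rw [huI]; exact huc.mul hDm
  rw [e1] at key
  have conv : ∀ {H : ℝ → ℝ≥0∞} {D : ℝ → ℝ}, Measurable H → (∫⁻ τ in Set.Ioc 0 T, H τ ≠ ⊤) →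
      IntervalIntegrable (fun τ => (H τ).toReal) volume 0 T → ContinuousOn D (Set.Icc 0 T) →
      (∀ t ∈ Set.Icc 0 T, 0 ≤ D t) →
      (0 ≤ ∫ t in (0:ℝ)..T, ((H t).toReal * φ t + u t * D t)) ∧
      ENNReal.ofReal (∫ t in (0:ℝ)..T, ((H t).toReal * φ t + u t * D t)) =
        ∫⁻ τ in Set.Ioc 0 T,
          (H τ * ENNReal.ofReal (φ τ) + ENNReal.ofReal (u τ) * ENNReal.ofReal (D τ)) := by
    intro H D hHm hH iH hD hD0
    have hi : IntervalIntegrable (fun t => (H t).toReal * φ t + u t * D t) volume 0 T := by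
      refine (iH.mul_continuousOn (by rwa [huI])).add (ContinuousOn.intervalIntegrable ?_)
      rw [huI]; exact huc.mul hD
    have hn : ∀ t ∈ Set.Icc 0 T, 0 ≤ (H t).toReal * φ t + u t * D t := fun t ht =>
      add_nonneg (mul_nonneg ENNReal.toReal_nonneg (hφ0 t ht)) (mul_nonneg (hu0 t) (hD0 t ht))
    refine ⟨intervalIntegral.integral_nonneg hT hn, ?_⟩
    rw [intervalIntegral.integral_of_le hT, ofReal_integral_eq_lintegral_ofReal]
    · refine lintegral_congr_ae ?_
      have hfin := ae_lt_top hHm hH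
      filter_upwards [hfin, ae_restrict_mem measurableSet_Ioc] with t h1 ht
      have ht' : t ∈ Set.Icc 0 T := ⟨ht.1.le, ht.2⟩
      rw [ENNReal.ofReal_add (mul_nonneg ENNReal.toReal_nonneg (hφ0 t ht'))
        (mul_nonneg (hu0 t) (hD0 t ht')), ENNReal.ofReal_mul ENNReal.toReal_nonneg,
        ENNReal.ofReal_toReal h1.ne, ENNReal.ofReal_mul (hu0 t)]
    · exact (intervalIntegrable_iff_integrableOn_Ioc_of_le hT).1 hi
    · filter_upwards [ae_restrict_mem measurableSet_Ioc] with t ht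
      exact hn t ⟨ht.1.le, ht.2⟩
  obtain ⟨n1, c1⟩ := conv hGm hG iG hDp hDp0
  obtain ⟨n2, c2⟩ := conv hLm hL iL hDm hDm0
  have hu00 : 0 ≤ u₀ := by
    have := hu0 0
    rw [hu 0 le_rfl] at this
    simpa using this
  rw [← c1, ← c2, ← ENNReal.ofReal_mul (hu0 T), ← ENNReal.ofReal_mul hu00,
    ← ENNReal.ofReal_add (mul_nonneg (hu0 T) (hφ0 T hTm)) n2,
    ← ENNReal.ofReal_add (mul_nonneg hu00 (hφ0 0 ⟨le_rfl, hT⟩)) n1]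
  congr 1
  linarith

/-- A solution of the homogeneous equation with kernel `k`, of constant mass `M₀` and constant
`∫ f ⟨v⟩² = M₂`. The collision rate `q` is identified with gain minus loss only where both are finite;
elsewhere its value is immaterial. -/
structure KinSol (N : ℕ) (k : Rn N → Rn N → Rn N → ℝ≥0∞) (f : ℝ → Rn N → ℝ)
    (M₀ M₂ : ℝ≥0∞) : Prop where
  nonneg : ∀ t v, 0 ≤ f t v
  meas : Measurable (Function.uncurry f)
  mass : ∀ t, 0 ≤ t → ∫⁻ v, ENNReal.ofReal (f t v) = M₀
  energy : ∀ t, 0 ≤ t → ∫⁻ v, ENNReal.ofReal (f t v) * ENNReal.ofReal (br v) = M₂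
  mass_fin : M₀ ≠ ⊤
  energy_fin : M₂ ≠ ⊤
  eqn : ∃ q : ℝ → Rn N → ℝ,
    (∀ t, 0 ≤ t → ∀ v, f t v = f 0 v + ∫ τ in Set.Ioc 0 t, q τ v) ∧
    ∀ t, 0 ≤ t → ∀ v, gainE k (fun v => ENNReal.ofReal (f t v)) v ≠ ⊤ →
      lossE k (fun v => ENNReal.ofReal (f t v)) v ≠ ⊤ →
      q t v = (gainE k (fun v => ENNReal.ofReal (f t v)) v).toReal
        - (lossE k (fun v => ENNReal.ofReal (f t v)) v).toReal

section
variable {N : ℕ} {k : Rn N → Rn N → Rn N → ℝ≥0∞} {δ cL : ℝ} {B M₀ M₂ : ℝ≥0∞}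
  {f : ℝ → Rn N → ℝ}

lemma KinSol.meas_t (hf : KinSol N k f M₀ M₂) (t : ℝ) :
    Measurable fun v => ENNReal.ofReal (f t v) :=
  (hf.meas.comp (measurable_prodMk_left (x := t))).ennreal_ofReal

variable [IsFiniteMeasure (sphMeas N)]

lemma measurable_gain2 (hk : CollKernel N k δ cL B) (hf : KinSol N k f M₀ M₂) :
    Measurable fun p : ℝ × Rn N => gainE k (fun v => ENNReal.ofReal (f p.1 v)) p.2 := by
  have h1 : Measurable fun p : ((ℝ × Rn N) × Rn N) × Rn N => k p.1.1.2 p.1.2 p.2 :=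
    hk.meas.comp (by fun_prop :
      Measurable fun p : ((ℝ × Rn N) × Rn N) × Rn N => ((p.1.1.2, p.1.2), p.2))
  have m2 : Measurable fun p : ((ℝ × Rn N) × Rn N) × Rn N => (p.1.1.1, vSP N p.1.1.2 p.1.2 p.2) := by
    unfold vSP; fun_prop
  have m3 : Measurable fun p : ((ℝ × Rn N) × Rn N) × Rn N => (p.1.1.1, vP N p.1.1.2 p.1.2 p.2) := by
    unfold vP; fun_prop
  have h2 : Measurable fun p : ((ℝ × Rn N) × Rn N) × Rn N =>
      ENNReal.ofReal (f p.1.1.1 (vSP N p.1.1.2 p.1.2 p.2)) := (hf.meas.comp m2).ennreal_ofReal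
  have h3 : Measurable fun p : ((ℝ × Rn N) × Rn N) × Rn N =>
      ENNReal.ofReal (f p.1.1.1 (vP N p.1.1.2 p.1.2 p.2)) := (hf.meas.comp m3).ennreal_ofReal
  exact (meas_mul h1 (meas_mul h2 h3)).lintegral_prod_right'.lintegral_prod_right'

lemma measurable_loss2 (hk : CollKernel N k δ cL B) (hf : KinSol N k f M₀ M₂) :
    Measurable fun p : ℝ × Rn N => lossE k (fun v => ENNReal.ofReal (f p.1 v)) p.2 := by
  have h1 : Measurable fun p : ((ℝ × Rn N) × Rn N) × Rn N => k p.1.1.2 p.1.2 p.2 :=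
    hk.meas.comp (by fun_prop :
      Measurable fun p : ((ℝ × Rn N) × Rn N) × Rn N => ((p.1.1.2, p.1.2), p.2))
  have m2 : Measurable fun p : ((ℝ × Rn N) × Rn N) × Rn N => (p.1.1.1, p.1.2) := by fun_prop
  have m3 : Measurable fun p : ((ℝ × Rn N) × Rn N) × Rn N => (p.1.1.1, p.1.1.2) := by fun_prop
  have h2 : Measurable fun p : ((ℝ × Rn N) × Rn N) × Rn N =>
      ENNReal.ofReal (f p.1.1.1 p.1.2) := (hf.meas.comp m2).ennreal_ofReal
  have h3 : Measurable fun p : ((ℝ × Rn N) × Rn N) × Rn N =>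
      ENNReal.ofReal (f p.1.1.1 p.1.1.2) := (hf.meas.comp m3).ennreal_ofReal
  exact (meas_mul h1 (meas_mul h2 h3)).lintegral_prod_right'.lintegral_prod_right'

lemma loss_le (hk : CollKernel N k δ cL B) (hf : KinSol N k f M₀ M₂) {t : ℝ} (ht : 0 ≤ t)
    {φ : Rn N → ℝ≥0∞} (hφ : Measurable φ) :
    ∫⁻ v, lossE k (fun v => ENNReal.ofReal (f t v)) v * φ v
      ≤ B * M₀ * ∫⁻ v, ENNReal.ofReal (f t v) * φ v := by
  rw [loss_moment hk (hf.meas_t t)]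
  have := collInt_le hk (hf.meas_t t) hφ (measurable_const (a := (1:ℝ≥0∞)))
  simp only [mul_one, hf.mass t ht] at this
  refine this.trans (le_of_eq ?_)
  ring

lemma gain_total (hN : 2 ≤ N) (hk : CollKernel N k δ cL B) (hf : KinSol N k f M₀ M₂) {t : ℝ} :
    ∫⁻ v, gainE k (fun v => ENNReal.ofReal (f t v)) v
      = ∫⁻ v, lossE k (fun v => ENNReal.ofReal (f t v)) v := by
  have h1 := gain_moment hN hk (hf.meas_t t) (measurable_const (a := (1:ℝ≥0∞)))
  have h2 := loss_moment (φ := fun _ => 1) hk (hf.meas_t t)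
  simp only [mul_one] at h1 h2
  rw [h1, h2]

/-- At almost every velocity the gain and loss are integrable over bounded time intervals, because their
integrals in `v` are equal and bounded by `B M₀²`. -/
lemma rate_fin (hN : 2 ≤ N) (hk : CollKernel N k δ cL B) (hB : B ≠ ⊤) (hf : KinSol N k f M₀ M₂)
    (T : ℝ) : ∀ᵐ v, (∫⁻ τ in Set.Ioc 0 T, gainE k (fun v => ENNReal.ofReal (f τ v)) v ≠ ⊤) ∧
      ∫⁻ τ in Set.Ioc 0 T, lossE k (fun v => ENNReal.ofReal (f τ v)) v ≠ ⊤ := by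
  have hGm := measurable_gain2 hk hf
  have hLm := measurable_loss2 hk hf
  have hl : ∀ τ, 0 ≤ τ → ∫⁻ v, lossE k (fun v => ENNReal.ofReal (f τ v)) v ≤ B * M₀ * M₀ := by
    intro τ hτ
    have := loss_le hk hf hτ (measurable_const (a := (1:ℝ≥0∞)))
    simpa only [mul_one, hf.mass τ hτ] using this
  have hfin : ∫⁻ τ in Set.Ioc 0 T, B * M₀ * M₀ ≠ ⊤ := by
    rw [lintegral_const]
    exact ENNReal.mul_ne_top (ENNReal.mul_ne_top (ENNReal.mul_ne_top hB hf.mass_fin) hf.mass_fin)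
      (measure_ne_top _ _)
  have sL : Measurable (Function.uncurry fun (v : Rn N) (τ : ℝ) =>
      lossE k (fun v => ENNReal.ofReal (f τ v)) v) := hLm.comp measurable_swap
  have sG : Measurable (Function.uncurry fun (v : Rn N) (τ : ℝ) =>
      gainE k (fun v => ENNReal.ofReal (f τ v)) v) := hGm.comp measurable_swap
  have h2 : ∫⁻ v, ∫⁻ τ in Set.Ioc 0 T, lossE k (fun v => ENNReal.ofReal (f τ v)) v ≠ ⊤ := by
    rw [lintegral_lintegral_swap sL.aemeasurable]
    refine ne_top_of_le_ne_top hfin (setLIntegral_mono' measurableSet_Ioc fun τ hτ => hl τ hτ.1.le)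
  have h1 : ∫⁻ v, ∫⁻ τ in Set.Ioc 0 T, gainE k (fun v => ENNReal.ofReal (f τ v)) v ≠ ⊤ := by
    rw [lintegral_lintegral_swap sG.aemeasurable]
    refine ne_top_of_le_ne_top hfin (setLIntegral_mono' measurableSet_Ioc fun τ hτ => ?_)
    rw [gain_total hN hk hf]
    exact hl τ hτ.1.le
  have m1 : Measurable fun v => ∫⁻ τ in Set.Ioc 0 T, gainE k (fun v => ENNReal.ofReal (f τ v)) v :=
    (hGm.comp measurable_swap).lintegral_prod_right'
  have m2 : Measurable fun v => ∫⁻ τ in Set.Ioc 0 T, lossE k (fun v => ENNReal.ofReal (f τ v)) v :=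
    (hLm.comp measurable_swap).lintegral_prod_right'
  filter_upwards [ae_lt_top m1 h1, ae_lt_top m2 h2] with v a1 a2 using ⟨a1.ne, a2.ne⟩

end

/-! ### Evolution of time-dependent moments -/

section
variable {N : ℕ} {k : Rn N → Rn N → Rn N → ℝ≥0∞} {δ cL : ℝ} {B M₀ M₂ : ℝ≥0∞}
  {f : ℝ → Rn N → ℝ}

/-- A time-dependent family `Ψ t` of weights on `[0, T]`, differentiable in time with
`∂ₜΨ = Dp - Dm`, where `Dp` and `Dm` are nonnegative and continuous in time. -/
structure TimeWeight (T a A : ℝ) (Ψ Dp Dm : ℝ → ℝ → ℝ) : Prop where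
  weight : ∀ t ∈ Set.Icc 0 T, IsWeight a A (Ψ t)
  measΨ : Measurable (Function.uncurry Ψ)
  measDp : Measurable (Function.uncurry Dp)
  measDm : Measurable (Function.uncurry Dm)
  deriv : ∀ x, 1 ≤ x → ∀ t ∈ Set.Icc 0 T, HasDerivAt (fun τ => Ψ τ x) (Dp t x - Dm t x) t
  contDp : ∀ x, 1 ≤ x → ContinuousOn (fun t => Dp t x) (Set.Icc 0 T)
  contDm : ∀ x, 1 ≤ x → ContinuousOn (fun t => Dm t x) (Set.Icc 0 T)
  Dp_nonneg : ∀ x, 1 ≤ x → ∀ t ∈ Set.Icc 0 T, 0 ≤ Dp t x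
  Dm_nonneg : ∀ x, 1 ≤ x → ∀ t ∈ Set.Icc 0 T, 0 ≤ Dm t x

variable [IsFiniteMeasure (sphMeas N)] {T a A : ℝ} {Ψ Dp Dm : ℝ → ℝ → ℝ}

/-- The weak form of the equation for a time-dependent weight, with all terms in `[0,∞]`. -/
lemma weak_moment (hN : 2 ≤ N) (hk : CollKernel N k δ cL B) (hB : B ≠ ⊤)
    (hf : KinSol N k f M₀ M₂) (hT : 0 ≤ T) (hΨ : TimeWeight T a A Ψ Dp Dm) :
    (∫⁻ v, ENNReal.ofReal (f T v) * ENNReal.ofReal (Ψ T (br v)))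
      + ((∫⁻ τ in Set.Ioc 0 T, ∫⁻ v, lossE k (fun v => ENNReal.ofReal (f τ v)) v
            * ENNReal.ofReal (Ψ τ (br v)))
        + ∫⁻ τ in Set.Ioc 0 T, ∫⁻ v, ENNReal.ofReal (f τ v) * ENNReal.ofReal (Dm τ (br v)))
    = (∫⁻ v, ENNReal.ofReal (f 0 v) * ENNReal.ofReal (Ψ 0 (br v)))
      + ((∫⁻ τ in Set.Ioc 0 T, ∫⁻ v, gainE k (fun v => ENNReal.ofReal (f τ v)) v
            * ENNReal.ofReal (Ψ τ (br v)))
        + ∫⁻ τ in Set.Ioc 0 T, ∫⁻ v, ENNReal.ofReal (f τ v) * ENNReal.ofReal (Dp τ (br v))) := by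
  have hGm := measurable_gain2 hk hf
  have hLm := measurable_loss2 hk hf
  have hbr : Measurable fun p : ℝ × Rn N => (p.1, br p.2) :=
    measurable_fst.prodMk (continuous_br.measurable.comp measurable_snd)
  have mΨ : Measurable fun p : ℝ × Rn N => ENNReal.ofReal (Ψ p.1 (br p.2)) :=
    (hΨ.measΨ.comp hbr).ennreal_ofReal
  have mDp : Measurable fun p : ℝ × Rn N => ENNReal.ofReal (Dp p.1 (br p.2)) :=
    (hΨ.measDp.comp hbr).ennreal_ofReal
  have mDm : Measurable fun p : ℝ × Rn N => ENNReal.ofReal (Dm p.1 (br p.2)) :=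
    (hΨ.measDm.comp hbr).ennreal_ofReal
  have mf : Measurable fun p : ℝ × Rn N => ENNReal.ofReal (f p.1 p.2) := hf.meas.ennreal_ofReal
  have mR1 := meas_mul hLm mΨ
  have mR2 := meas_mul hGm mΨ
  have mP := meas_mul mf mDp
  have mM := meas_mul mf mDm
  have tonelli : ∀ {H K : ℝ × Rn N → ℝ≥0∞}, Measurable H → Measurable K →
      (∫⁻ τ in Set.Ioc 0 T, ∫⁻ v, H (τ, v)) + (∫⁻ τ in Set.Ioc 0 T, ∫⁻ v, K (τ, v))
        = ∫⁻ v, ∫⁻ τ in Set.Ioc 0 T, (H (τ, v) + K (τ, v)) := by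
    intro H K hH hK
    have s : Measurable (Function.uncurry fun (v : Rn N) (τ : ℝ) => H (τ, v) + K (τ, v)) :=
      (hH.add hK).comp measurable_swap
    rw [lintegral_lintegral_swap s.aemeasurable, ← lintegral_add_left hH.lintegral_prod_right']
    refine lintegral_congr fun τ => ?_
    rw [lintegral_add_left]
    exact hH.comp measurable_prodMk_left
  rw [tonelli mR1 mM, tonelli mR2 mP]
  have sec : ∀ {H : ℝ × Rn N → ℝ≥0∞}, Measurable H → ∀ t, Measurable fun v => H (t, v) :=
    fun hH t => hH.comp measurable_prodMk_left
  rw [← lintegral_add_left (meas_mul (sec mf T) (sec mΨ T)),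
    ← lintegral_add_left (meas_mul (sec mf 0) (sec mΨ 0))]
  obtain ⟨q, hq1, hq2⟩ := hf.eqn
  refine lintegral_congr_ae ?_
  filter_upwards [rate_fin hN hk hB hf T] with v hv
  have mGv : Measurable fun τ => gainE k (fun v => ENNReal.ofReal (f τ v)) v :=
    hGm.comp (measurable_id.prodMk measurable_const)
  have mLv : Measurable fun τ => lossE k (fun v => ENNReal.ofReal (f τ v)) v :=
    hLm.comp (measurable_id.prodMk measurable_const)
  have hx := one_le_br v
  refine weak_scalar (u := fun t => f t v) (q := fun τ => q τ v) (φ := fun τ => Ψ τ (br v))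
    (Dp := fun τ => Dp τ (br v)) (Dm := fun τ => Dm τ (br v)) hT mGv mLv hv.1 hv.2 ?_
    (fun t ht => hq1 t ht v) (fun t => hf.nonneg t v)
    (fun t ht => (hΨ.weight t ht).nonneg _ (by linarith)) (hΨ.deriv _ hx) (hΨ.contDp _ hx)
    (hΨ.contDm _ hx) (hΨ.Dp_nonneg _ hx) (hΨ.Dm_nonneg _ hx)
  filter_upwards [ae_lt_top mGv hv.1, ae_lt_top mLv hv.2, ae_restrict_mem measurableSet_Ioc]
    with τ h1 h2 hτ
  exact hq2 τ hτ.1.le v h1.ne h2.ne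

/-- Combination of the weak form and the integrated Povzner inequality. Under `hfin` the loss moment is
finite and cancels. -/
lemma evolution (hN : 2 ≤ N) (hk : CollKernel N k δ cL B) (hB : B ≠ ⊤) {κ : ℝ≥0∞}
    (hκ : ∀ e : Rn N, ‖e‖ = 1 → ∫⁻ σ, ENNReal.ofReal (1 - ⟪e, σ⟫ ^ 2) ∂(sphMeas N) = κ)
    (hf : KinSol N k f M₀ M₂) (hcL : 0 ≤ cL) (hT : 0 ≤ T) (ha : 1 ≤ a) (hA : 1 ≤ A)
    (hΨ : TimeWeight T a A Ψ Dp Dm)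
    (hfin : ∫⁻ τ in Set.Ioc 0 T, ∫⁻ v, ENNReal.ofReal (f τ v) * ENNReal.ofReal (Ψ τ (br v)) ≠ ⊤) :
    2 * (∫⁻ v, ENNReal.ofReal (f T v) * ENNReal.ofReal (Ψ T (br v)))
      + (2 * (∫⁻ τ in Set.Ioc 0 T, ∫⁻ v, ENNReal.ofReal (f τ v) * ENNReal.ofReal (Dm τ (br v)))
        + ∫⁻ τ in Set.Ioc 0 T, ENNReal.ofReal (splitConst a / 8 * cL) * κ
            * (∫⁻ w, ENNReal.ofReal (f τ w) * ENNReal.ofReal (br w)⁻¹)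
            * (∫⁻ v, ENNReal.ofReal (f τ v) * ENNReal.ofReal (Ψ τ (br v) * br v ^ (-δ))))
    ≤ 2 * (∫⁻ v, ENNReal.ofReal (f 0 v) * ENNReal.ofReal (Ψ 0 (br v)))
      + (2 * (∫⁻ τ in Set.Ioc 0 T, ∫⁻ v, ENNReal.ofReal (f τ v) * ENNReal.ofReal (Dp τ (br v)))
        + ∫⁻ τ in Set.Ioc 0 T, 2 * ENNReal.ofReal (2 ^ A) * B
            * (∫⁻ v, ENNReal.ofReal (f τ v) * ENNReal.ofReal (Ψ τ (br v) / br v)) * M₂) := by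
  have hw := weak_moment hN hk hB hf hT hΨ
  have hL : ∫⁻ τ in Set.Ioc 0 T, ∫⁻ v, lossE k (fun v => ENNReal.ofReal (f τ v)) v
            * ENNReal.ofReal (Ψ τ (br v)) ≠ ⊤ := by
    refine ne_top_of_le_ne_top (ENNReal.mul_ne_top (ENNReal.mul_ne_top hB hf.mass_fin) hfin) ?_
    rw [← lintegral_const_mul' _ _ (ENNReal.mul_ne_top hB hf.mass_fin)]
    refine setLIntegral_mono' measurableSet_Ioc fun τ hτ => ?_
    exact loss_le hk hf hτ.1.le (φ := fun v => ENNReal.ofReal (Ψ τ (br v)))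
      ((hΨ.measΨ.comp (measurable_const.prodMk continuous_br.measurable)).ennreal_ofReal)
  set XT := ∫⁻ v, ENNReal.ofReal (f T v) * ENNReal.ofReal (Ψ T (br v))
  set X0 := ∫⁻ v, ENNReal.ofReal (f 0 v) * ENNReal.ofReal (Ψ 0 (br v))
  set LL := ∫⁻ τ in Set.Ioc 0 T, ∫⁻ v, lossE k (fun v => ENNReal.ofReal (f τ v)) v
            * ENNReal.ofReal (Ψ τ (br v)) with hLL
  set GG := ∫⁻ τ in Set.Ioc 0 T, ∫⁻ v, gainE k (fun v => ENNReal.ofReal (f τ v)) v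
            * ENNReal.ofReal (Ψ τ (br v)) with hGG
  set Im := ∫⁻ τ in Set.Ioc 0 T, ∫⁻ v, ENNReal.ofReal (f τ v) * ENNReal.ofReal (Dm τ (br v))
  set Ip := ∫⁻ τ in Set.Ioc 0 T, ∫⁻ v, ENNReal.ofReal (f τ v) * ENNReal.ofReal (Dp τ (br v))
  set Z := ∫⁻ τ in Set.Ioc 0 T, ENNReal.ofReal (splitConst a / 8 * cL) * κ
            * (∫⁻ w, ENNReal.ofReal (f τ w) * ENNReal.ofReal (br w)⁻¹)
            * (∫⁻ v, ENNReal.ofReal (f τ v) * ENNReal.ofReal (Ψ τ (br v) * br v ^ (-δ))) with hZ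
  set Y := ∫⁻ τ in Set.Ioc 0 T, 2 * ENNReal.ofReal (2 ^ A) * B
            * (∫⁻ v, ENNReal.ofReal (f τ v) * ENNReal.ofReal (Ψ τ (br v) / br v)) * M₂ with hY
  have hbr : Measurable fun p : ℝ × Rn N => (p.1, br p.2) :=
    measurable_fst.prodMk (continuous_br.measurable.comp measurable_snd)
  have mΨ : Measurable fun p : ℝ × Rn N => ENNReal.ofReal (Ψ p.1 (br p.2)) :=
    (hΨ.measΨ.comp hbr).ennreal_ofReal
  have key : 2 * GG + Z ≤ 2 * LL + Y := by
    rw [hGG, hLL, ← lintegral_const_mul' _ _ (by norm_num), ← lintegral_const_mul' _ _ (by norm_num),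
      hZ, hY, ← lintegral_add_left, ← lintegral_add_left]
    · refine setLIntegral_mono' measurableSet_Ioc fun τ hτ => ?_
      have := moment_ineq hN hk hκ ha hA (hΨ.weight τ ⟨hτ.1.le, hτ.2⟩)
        (hΨ.measΨ.comp (measurable_const.prodMk measurable_id)) hcL (hf.meas_t τ)
      rwa [hf.energy τ hτ.1.le] at this
    · exact (meas_mul (measurable_loss2 hk hf) mΨ).lintegral_prod_right'.const_mul 2
    · exact (meas_mul (measurable_gain2 hk hf) mΨ).lintegral_prod_right'.const_mul 2
  have h2L : 2 * LL ≠ ⊤ := ENNReal.mul_ne_top (by norm_num) hL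
  refine (ENNReal.add_le_add_iff_right h2L).1 ?_
  calc 2 * XT + (2 * Im + Z) + 2 * LL = 2 * (XT + (LL + Im)) + Z := by ring
    _ = 2 * (X0 + (GG + Ip)) + Z := by rw [hw]
    _ = 2 * X0 + 2 * Ip + (2 * GG + Z) := by ring
    _ ≤ 2 * X0 + 2 * Ip + (2 * LL + Y) := by gcongr
    _ = _ := by ring

/-- Lower bound `M₀²/M₂` for the moment of order `-2`; this is the Cauchy–Schwarz inequality, in the
linearised form `2ε ≤ y⁻¹ + ε² y` with `ε = M₀/M₂`. -/
lemma neg_moment_lower (hf : KinSol N k f M₀ M₂) (h0 : M₀ ≠ 0) {t : ℝ} (ht : 0 ≤ t) :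
    M₀ * M₀ / M₂ ≤ ∫⁻ w, ENNReal.ofReal (f t w) * ENNReal.ofReal (br w)⁻¹ := by
  have hle : M₀ ≤ M₂ := by
    rw [← hf.mass t ht, ← hf.energy t ht]
    refine lintegral_mono fun v => ?_
    refine le_mul_of_one_le_right' ?_
    rw [← ENNReal.ofReal_one]
    exact ENNReal.ofReal_le_ofReal (one_le_br v)
  have h2 : M₂ ≠ 0 := fun h => h0 (le_antisymm (h ▸ hle) zero_le)
  set m := M₀.toReal
  set e := M₂.toReal
  have hm : M₀ = ENNReal.ofReal m := (ENNReal.ofReal_toReal hf.mass_fin).symm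
  have he : M₂ = ENNReal.ofReal e := (ENNReal.ofReal_toReal hf.energy_fin).symm
  have hm0 : 0 < m := ENNReal.toReal_pos h0 hf.mass_fin
  have he0 : 0 < e := ENNReal.toReal_pos h2 hf.energy_fin
  have hp : ∀ w : Rn N, 2 * (m / e) ≤ (br w)⁻¹ + (m / e) ^ 2 * br w := by
    intro w
    have hb := br_pos w
    have : (br w)⁻¹ + (m / e) ^ 2 * br w - 2 * (m / e) = (br w)⁻¹ * (1 - m / e * br w) ^ 2 := by
      field_simp; ring
    have h3 : 0 ≤ (br w)⁻¹ * (1 - m / e * br w) ^ 2 := by positivity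
    linarith
  have hint : ENNReal.ofReal (2 * (m / e)) * M₀ ≤
      (∫⁻ w, ENNReal.ofReal (f t w) * ENNReal.ofReal (br w)⁻¹)
        + ENNReal.ofReal ((m / e) ^ 2) * M₂ := by
    have mb : Measurable fun w : Rn N => ENNReal.ofReal (br w)⁻¹ :=
      (continuous_br.measurable.inv).ennreal_ofReal
    rw [← hf.mass t ht, ← hf.energy t ht, ← lintegral_const_mul' _ _ ofReal_ne_top,
      ← lintegral_const_mul' _ _ ofReal_ne_top, ← lintegral_add_left (meas_mul (hf.meas_t t) mb)]
    refine lintegral_mono fun w => ?_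
    have hb := br_pos w
    calc ENNReal.ofReal (2 * (m / e)) * ENNReal.ofReal (f t w)
        ≤ ENNReal.ofReal ((br w)⁻¹ + (m / e) ^ 2 * br w) * ENNReal.ofReal (f t w) := by
          gcongr; exact hp w
      _ = _ := by
        rw [ENNReal.ofReal_add (by positivity) (by positivity), ENNReal.ofReal_mul (by positivity)]
        ring
  have e1 : ENNReal.ofReal (2 * (m / e)) * M₀ = M₀ * M₀ / M₂ + ENNReal.ofReal ((m / e) ^ 2) * M₂ := by
    rw [hm, he, ← ENNReal.ofReal_mul hm0.le, ← ENNReal.ofReal_mul (by positivity),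
      ← ENNReal.ofReal_mul (by positivity), ← ENNReal.ofReal_div_of_pos he0,
      ← ENNReal.ofReal_add (by positivity) (by positivity)]
    congr 1
    field_simp; ring
  rw [e1] at hint
  exact (ENNReal.add_le_add_iff_right (ENNReal.mul_ne_top ofReal_ne_top hf.energy_fin)).1 hint

end

/-! ### The weights -/

lemma IsWeight.const_mul {a A c : ℝ} {ψ : ℝ → ℝ} (h : IsWeight a A ψ) (hc : 0 ≤ c) :
    IsWeight a A fun x => c * ψ x where
  nonneg x hx := mul_nonneg hc (h.nonneg x hx)
  shrink l x h0 h1 hx := by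
    have := mul_le_mul_of_nonneg_left (h.shrink l x h0 h1 hx) hc
    linarith
  stretch l x h0 h1 hx := by
    have := mul_le_mul_of_nonneg_left (h.stretch l x h0 h1 hx) hc
    linarith

/-- The truncated power; its moments are finite because the energy is. -/
lemma isWeight_trunc {a R : ℝ} (ha : 1 ≤ a) (hR : 0 ≤ R) :
    IsWeight 1 a fun x => min (x ^ a) (R * x) where
  nonneg x hx := le_min (rpow_nonneg hx a) (mul_nonneg hR hx)
  shrink l x h0 h1 hx := by
    rw [Real.rpow_one, mul_min_of_nonneg _ _ h0, Real.mul_rpow h0 hx]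
    refine min_le_min ?_ (by linarith)
    refine mul_le_mul_of_nonneg_right ?_ (rpow_nonneg hx a)
    rcases h0.eq_or_lt with rfl | hl
    · rw [zero_rpow (by linarith)]
    · simpa using rpow_le_rpow_of_exponent_ge hl h1 ha
  stretch l x h0 h1 hx := by
    have hl : 0 ≤ l := by linarith
    rw [mul_min_of_nonneg _ _ (rpow_nonneg hl a), Real.mul_rpow hl hx]
    refine min_le_min le_rfl ?_
    have : l ≤ l ^ a := by simpa using rpow_le_rpow_of_exponent_le h0 ha
    have := mul_le_mul_of_nonneg_right this (mul_nonneg hR hx)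
    linarith

lemma ratio_mono {u v θ : ℝ} (hu : 0 ≤ u) (huv : u ≤ v) (hθ : 0 ≤ θ) :
    u / (u + θ) ≤ v / (v + θ) := by
  rcases hu.eq_or_lt with rfl | hu
  · rw [zero_div]; positivity
  · rw [div_le_div_iff₀ (by linarith) (by linarith)]
    nlinarith

lemma ratio_stretch {u m θ : ℝ} (hu : 0 ≤ u) (hm : 1 ≤ m) (hθ : 0 ≤ θ) :
    m * u / (m * u + θ) ≤ m * (u / (u + θ)) := by
  rcases hu.eq_or_lt with rfl | hu
  · simp
  · rw [← mul_div_assoc]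
    have : u ≤ m * u := by nlinarith
    gcongr

/-- The cut-off power `x^a (x^δ/(x^δ + θ))²`, which equals `x^a` for `θ = 0`. -/
def cutW (a δ θ x : ℝ) : ℝ := x ^ a * (x ^ δ / (x ^ δ + θ)) ^ 2

lemma isWeight_cutW {a δ θ : ℝ} (hδ : 0 ≤ δ) (hθ : 0 ≤ θ) :
    IsWeight a (a + 2 * δ) (cutW a δ θ) where
  nonneg x hx := by unfold cutW; positivity
  shrink l x h0 h1 hx := by
    unfold cutW
    rw [Real.mul_rpow h0 hx, mul_assoc]
    have hp := rpow_nonneg (mul_nonneg h0 hx) δ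
    have h : (l * x) ^ δ / ((l * x) ^ δ + θ) ≤ x ^ δ / (x ^ δ + θ) :=
      ratio_mono hp (rpow_le_rpow (mul_nonneg h0 hx) (by nlinarith) hδ) hθ
    gcongr
  stretch l x h0 h1 hx := by
    have hl : 0 < l := by linarith
    have hp := rpow_nonneg hx δ
    have h := ratio_stretch hp (one_le_rpow h0 hδ) hθ
    unfold cutW
    rw [Real.mul_rpow hl.le hx, Real.mul_rpow hl.le hx, Real.rpow_add hl, two_mul δ,
      Real.rpow_add hl]
    calc l ^ a * x ^ a * (l ^ δ * x ^ δ / (l ^ δ * x ^ δ + θ)) ^ 2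
        ≤ l ^ a * x ^ a * (l ^ δ * (x ^ δ / (x ^ δ + θ))) ^ 2 := by gcongr
      _ = _ := by ring

lemma cutW_le {a δ θ x : ℝ} (hx : 1 ≤ x) (hθ : 0 ≤ θ) : cutW a δ θ x ≤ x ^ a := by
  have hp : 0 < x ^ δ := rpow_pos_of_pos (by linarith) δ
  have h0 : 0 ≤ x ^ a := rpow_nonneg (by linarith) a
  have h1 : x ^ δ / (x ^ δ + θ) ≤ 1 := by rw [div_le_one (by positivity)]; linarith
  have h2 : (x ^ δ / (x ^ δ + θ)) ^ 2 ≤ 1 := pow_le_one₀ (by positivity) h1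
  unfold cutW
  nlinarith

lemma cutW_zero {a δ x : ℝ} (hx : 1 ≤ x) : cutW a δ 0 x = x ^ a := by
  have hp : 0 < x ^ δ := rpow_pos_of_pos (by linarith) δ
  unfold cutW
  rw [add_zero, div_self hp.ne']; ring

/-- The time derivative of `cutW a δ θ x` along `θ = c (T - t)`. -/
def cutD (a δ c θ x : ℝ) : ℝ := x ^ a * (2 * (x ^ δ / (x ^ δ + θ)) * (x ^ δ * c / (x ^ δ + θ) ^ 2))

lemma cutD_nonneg {a δ c θ x : ℝ} (hx : 1 ≤ x) (hθ : 0 ≤ θ) (hc : 0 ≤ c) :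
    0 ≤ cutD a δ c θ x := by
  have hp : 0 < x ^ δ := rpow_pos_of_pos (by linarith) δ
  have h0 : 0 ≤ x ^ a := rpow_nonneg (by linarith) a
  unfold cutD; positivity

lemma cutD_le {a δ c θ x : ℝ} (hx : 1 ≤ x) (hθ : 0 ≤ θ) (hc : 0 ≤ c) :
    cutD a δ c θ x ≤ 2 * c * (cutW a δ θ x * x ^ (-δ)) := by
  have hp : 0 < x ^ δ := rpow_pos_of_pos (by linarith) δ
  have h0 : 0 ≤ x ^ a := rpow_nonneg (by linarith) a
  rw [Real.rpow_neg (by linarith)]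
  unfold cutD cutW
  have h1 : 0 ≤ 2 * c * (x ^ a * (x ^ δ / (x ^ δ + θ)) ^ 2) := by positivity
  calc _ = 2 * c * (x ^ a * (x ^ δ / (x ^ δ + θ)) ^ 2) * (x ^ δ + θ)⁻¹ := by field_simp
    _ ≤ 2 * c * (x ^ a * (x ^ δ / (x ^ δ + θ)) ^ 2) * (x ^ δ)⁻¹ := by gcongr; linarith
    _ = _ := by ring

lemma cutW_le_of_le {a δ θ x K : ℝ} (ha : 0 ≤ a) (hδ : 0 ≤ δ) (hx : 1 ≤ x) (hxK : x ≤ K)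
    (hθ : 0 ≤ θ) : cutW a δ θ x ≤ K ^ (a + 2 * δ) * (1 / (1 + θ) ^ 2) := by
  have hx0 : 0 < x := by linarith
  have hp : 1 ≤ x ^ δ := one_le_rpow hx hδ
  have h0 : 0 ≤ x ^ a := rpow_nonneg (by linarith) a
  have e : cutW a δ θ x = x ^ (a + 2 * δ) * (1 / (x ^ δ + θ) ^ 2) := by
    unfold cutW
    rw [Real.rpow_add hx0, two_mul δ, Real.rpow_add hx0, div_pow]
    ring
  rw [e]
  have : x ^ (a + 2 * δ) ≤ K ^ (a + 2 * δ) := rpow_le_rpow hx0.le hxK (by linarith)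
  have h1 : 0 ≤ K ^ (a + 2 * δ) := rpow_nonneg (by linarith) _
  gcongr

/-- For `x ≥ K` the coercive term absorbs both the time derivative of the weight and the Povzner error.
For `x ≤ K` the error is bounded by a multiple of `(1 + θ)^{-2}`, which is integrable in time
uniformly in `T` when `θ = c (T - t)`. -/
lemma cut_absorb {a δ lam Lam K : ℝ} (ha : 0 ≤ a) (hδ : 0 ≤ δ) (hlam : 0 < lam) (hLam : 0 ≤ Lam)
    (hK1 : 1 ≤ K) (hK : ∀ x, K ≤ x → 2 * Lam / lam ≤ x ^ (1 - δ)) {x θ : ℝ} (hx : 1 ≤ x)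
    (hθ : 0 ≤ θ) :
    2 * cutD a δ (lam / 8) θ x + Lam * (cutW a δ θ x / x)
      ≤ lam * (cutW a δ θ x * x ^ (-δ)) + Lam * K ^ (a + 2 * δ) * (1 / (1 + θ) ^ 2) := by
  have hx0 : 0 < x := by linarith
  have h1 := cutD_le (a := a) (δ := δ) hx hθ (show 0 ≤ lam / 8 by positivity)
  have hW : 0 ≤ cutW a δ θ x := (isWeight_cutW hδ hθ).nonneg x hx0.le
  have hn : 0 ≤ x ^ (-δ) := rpow_nonneg hx0.le _
  have hR : 0 ≤ Lam * K ^ (a + 2 * δ) * (1 / (1 + θ) ^ 2) := by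
    have : 0 ≤ K ^ (a + 2 * δ) := rpow_nonneg (by linarith) _
    positivity
  have hWn : 0 ≤ lam * (cutW a δ θ x * x ^ (-δ)) := by positivity
  rcases le_total K x with h | h
  · have h2 := hK x h
    rw [sub_eq_add_neg, Real.rpow_add hx0, Real.rpow_one, div_le_iff₀ hlam] at h2
    have h3 : Lam * (cutW a δ θ x / x) ≤ lam / 2 * (cutW a δ θ x * x ^ (-δ)) := by
      rw [← mul_div_assoc, div_le_iff₀ hx0]
      nlinarith
    linarith
  · have h2 := cutW_le_of_le ha hδ hx h hθ
    have h3 : cutW a δ θ x / x ≤ cutW a δ θ x := div_le_self hW hx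
    have h4 : Lam * (cutW a δ θ x / x) ≤ Lam * K ^ (a + 2 * δ) * (1 / (1 + θ) ^ 2) := by
      rw [mul_assoc]; exact mul_le_mul_of_nonneg_left (h3.trans h2) hLam
    linarith

lemma integral_tail {c T : ℝ} (hc : 0 < c) (hT : 0 ≤ T) :
    ∫⁻ τ in Set.Ioc 0 T, ENNReal.ofReal (1 / (1 + c * (T - τ)) ^ 2) ≤ ENNReal.ofReal (1 / c) := by
  have hpos : ∀ τ ∈ Set.Icc 0 T, 0 < 1 + c * (T - τ) := fun τ hτ => by
    have := mul_nonneg hc.le (sub_nonneg.2 hτ.2); linarith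
  have hcont : ContinuousOn (fun τ => 1 / (1 + c * (T - τ)) ^ 2) (Set.Icc 0 T) := by
    refine ContinuousOn.div (by fun_prop) (by fun_prop) fun τ hτ => ?_
    have := hpos τ hτ; positivity
  have hi : IntervalIntegrable (fun τ => 1 / (1 + c * (T - τ)) ^ 2) volume 0 T := by
    refine ContinuousOn.intervalIntegrable ?_
    rwa [Set.uIcc_of_le hT]
  rw [← ofReal_integral_eq_lintegral_ofReal]
  · refine ENNReal.ofReal_le_ofReal ?_
    rw [← intervalIntegral.integral_of_le hT,
      intervalIntegral.integral_eq_sub_of_hasDerivAt (f := fun τ => 1 / c * (1 + c * (T - τ))⁻¹) _ hi]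
    · have : 0 ≤ 1 / c * (1 + c * (T - 0))⁻¹ := by
        have := hpos 0 ⟨le_rfl, hT⟩; positivity
      simp only [sub_self, mul_zero, add_zero, inv_one, mul_one]
      linarith
    · intro τ hτ
      rw [Set.uIcc_of_le hT] at hτ
      have h0 := hpos τ hτ
      have h1 : HasDerivAt (fun τ => 1 + c * (T - τ)) (c * (-1)) τ :=
        (((hasDerivAt_id τ).const_sub T).const_mul c).const_add 1
      refine ((h1.fun_inv h0.ne').const_mul (1 / c)).congr_deriv ?_
      field_simp
  · exact (intervalIntegrable_iff_integrableOn_Ioc_of_le hT).1 hi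
  · filter_upwards with τ
    positivity

lemma timeWeight_cut {T a δ c : ℝ} (hδ : 0 ≤ δ) (hc : 0 ≤ c) :
    TimeWeight T a (a + 2 * δ) (fun t x => cutW a δ (c * (T - t)) x)
      (fun t x => cutD a δ c (c * (T - t)) x) (fun _ _ => 0) := by
  have hθ : ∀ t ∈ Set.Icc 0 T, 0 ≤ c * (T - t) := fun t ht => mul_nonneg hc (sub_nonneg.2 ht.2)
  have hp : ∀ x : ℝ, 1 ≤ x → 0 < x ^ δ := fun x hx => rpow_pos_of_pos (by linarith) δ
  refine ⟨fun t ht => isWeight_cutW hδ (hθ t ht), ?_, ?_, measurable_const, ?_, ?_, ?_, ?_, ?_⟩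
  · unfold cutW; simp only [Function.uncurry_def]; fun_prop
  · unfold cutD; simp only [Function.uncurry_def]; fun_prop
  · intro x hx t ht
    have hpx := hp x hx
    have hd : x ^ δ + c * (T - t) ≠ 0 := by have := hθ t ht; positivity
    have h1 : HasDerivAt (fun τ => x ^ δ + c * (T - τ)) (c * (-1)) t :=
      (((hasDerivAt_id t).const_sub T).const_mul c).const_add _
    have h2 := ((((hasDerivAt_const t (x ^ δ)).fun_div h1 hd).fun_pow 2).const_mul (x ^ a))
    unfold cutW cutD
    refine h2.congr_deriv ?_
    push_cast
    ring
  · intro x hx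
    have hpx := hp x hx
    unfold cutD
    have hne : ∀ t ∈ Set.Icc 0 T, x ^ δ + c * (T - t) ≠ 0 := fun t ht => by
      have := hθ t ht; positivity
    refine ContinuousOn.mul (by fun_prop) (ContinuousOn.mul (ContinuousOn.mul (by fun_prop) ?_) ?_)
    · exact ContinuousOn.div (by fun_prop) (by fun_prop) hne
    · exact ContinuousOn.div (by fun_prop) (by fun_prop) fun t ht => pow_ne_zero 2 (hne t ht)
  · intro x _; exact continuousOn_const
  · intro x hx t ht; exact cutD_nonneg hx (hθ t ht) hc
  · intro x _ t _; exact le_rfl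

lemma timeWeight_exp {T a C R : ℝ} (ha : 1 ≤ a) (hC : 0 ≤ C) (hR : 0 ≤ R) :
    TimeWeight T 1 a (fun t x => exp (-(C * t)) * min (x ^ a) (R * x)) (fun _ _ => 0)
      (fun t x => C * (exp (-(C * t)) * min (x ^ a) (R * x))) := by
  have hn : ∀ x : ℝ, 1 ≤ x → 0 ≤ min (x ^ a) (R * x) := fun x hx =>
    (isWeight_trunc ha hR).nonneg x (by linarith)
  refine ⟨fun t _ => (isWeight_trunc ha hR).const_mul (exp_pos _).le, ?_, measurable_const, ?_,
    ?_, ?_, ?_, ?_, ?_⟩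
  · simp only [Function.uncurry_def]; fun_prop
  · simp only [Function.uncurry_def]; fun_prop
  · intro x _ t _
    have h1 : HasDerivAt (fun τ : ℝ => -(C * τ)) (-(C * 1)) t :=
      ((hasDerivAt_id t).const_mul C).neg
    refine (h1.exp.mul_const (min (x ^ a) (R * x))).congr_deriv ?_
    ring
  · intro x _; exact continuousOn_const
  · intro x _; fun_prop
  · intro x _ t _; exact le_rfl
  · intro x hx t _
    have := hn x hx
    positivity

/-! ### Moment bounds -/

section
variable {N : ℕ} {k : Rn N → Rn N → Rn N → ℝ≥0∞} {δ cL a : ℝ} {B M₀ M₂ κ M : ℝ≥0∞}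
  {f : ℝ → Rn N → ℝ} [IsFiniteMeasure (sphMeas N)]

/-- Exponential growth of truncated moments, uniformly in the truncation: the weight
`e^{-Ct} min (x^a) (R x)` loses enough through its time derivative to absorb the Povzner error. -/
lemma trunc_growth (hN : 2 ≤ N) (hk : CollKernel N k δ cL B) (hB : B ≠ ⊤)
    (hκ : ∀ e : Rn N, ‖e‖ = 1 → ∫⁻ σ, ENNReal.ofReal (1 - ⟪e, σ⟫ ^ 2) ∂(sphMeas N) = κ)
    (hf : KinSol N k f M₀ M₂) (hcL : 0 ≤ cL) (ha : 1 ≤ a) :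
    ∃ C : ℝ, 0 ≤ C ∧ ∀ T, 0 ≤ T → ∀ R, 0 ≤ R →
      ∫⁻ v, ENNReal.ofReal (f T v) * ENNReal.ofReal (min (br v ^ a) (R * br v))
        ≤ ENNReal.ofReal (exp (C * T)) *
          ∫⁻ v, ENNReal.ofReal (f 0 v) * ENNReal.ofReal (br v ^ a) := by
  have hΛ : 2 * ENNReal.ofReal (2 ^ a) * B * M₂ ≠ ⊤ :=
    ENNReal.mul_ne_top (ENNReal.mul_ne_top (ENNReal.mul_ne_top (by norm_num) ofReal_ne_top) hB)
      hf.energy_fin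
  set C := (2 * ENNReal.ofReal (2 ^ a) * B * M₂).toReal with hC
  have hC0 : 0 ≤ C := ENNReal.toReal_nonneg
  have hCe : ENNReal.ofReal C = 2 * ENNReal.ofReal (2 ^ a) * B * M₂ := ENNReal.ofReal_toReal hΛ
  refine ⟨C, hC0, fun T hT R hR => ?_⟩
  have hw := timeWeight_exp (T := T) ha hC0 hR
  set Ψ : ℝ → ℝ → ℝ := fun t x => exp (-(C * t)) * min (x ^ a) (R * x) with hΨ
  have hmin : ∀ v : Rn N, 0 ≤ min (br v ^ a) (R * br v) := fun v =>
    (isWeight_trunc ha hR).nonneg _ (br_pos v).le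
  have hΨ0 : ∀ τ (v : Rn N), 0 ≤ Ψ τ (br v) := fun τ v => mul_nonneg (exp_pos _).le (hmin v)
  have hXR : ∀ τ, 0 ≤ τ →
      ∫⁻ v, ENNReal.ofReal (f τ v) * ENNReal.ofReal (Ψ τ (br v)) ≤ ENNReal.ofReal R * M₂ := by
    intro τ hτ
    rw [← hf.energy τ hτ, ← lintegral_const_mul' _ _ ofReal_ne_top]
    refine lintegral_mono fun v => ?_
    have h1 : Ψ τ (br v) ≤ R * br v := by
      have e1 : exp (-(C * τ)) ≤ 1 := exp_le_one_iff.2 (by have := mul_nonneg hC0 hτ; linarith)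
      calc Ψ τ (br v) ≤ 1 * min (br v ^ a) (R * br v) := mul_le_mul_of_nonneg_right e1 (hmin v)
        _ ≤ R * br v := by rw [one_mul]; exact min_le_right _ _
    calc _ ≤ ENNReal.ofReal (f τ v) * ENNReal.ofReal (R * br v) := by gcongr
      _ = _ := by rw [ENNReal.ofReal_mul hR]; ring
  have hfin : ∫⁻ τ in Set.Ioc 0 T, ∫⁻ v, ENNReal.ofReal (f τ v) * ENNReal.ofReal (Ψ τ (br v)) ≠ ⊤ := by
    refine ne_top_of_le_ne_top ?_ (setLIntegral_mono' measurableSet_Ioc fun τ hτ => hXR τ hτ.1.le)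
    rw [lintegral_const]
    exact ENNReal.mul_ne_top (ENNReal.mul_ne_top ofReal_ne_top hf.energy_fin) (measure_ne_top _ _)
  have hev := evolution hN hk hB hκ hf hcL hT le_rfl ha hw hfin
  set J := ∫⁻ τ in Set.Ioc 0 T, ∫⁻ v, ENNReal.ofReal (f τ v) * ENNReal.ofReal (Ψ τ (br v))
  have hJfin : ENNReal.ofReal C * J ≠ ⊤ := ENNReal.mul_ne_top ofReal_ne_top hfin
  have hDm : ∫⁻ τ in Set.Ioc 0 T, ∫⁻ v, ENNReal.ofReal (f τ v) *
      ENNReal.ofReal (C * (exp (-(C * τ)) * min (br v ^ a) (R * br v))) = ENNReal.ofReal C * J := by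
    rw [← lintegral_const_mul' _ _ ofReal_ne_top]
    refine lintegral_congr fun τ => ?_
    rw [← lintegral_const_mul' _ _ ofReal_ne_top]
    refine lintegral_congr fun v => ?_
    rw [ENNReal.ofReal_mul hC0]
    ring
  have hY : ∫⁻ τ in Set.Ioc 0 T, 2 * ENNReal.ofReal (2 ^ a) * B
      * (∫⁻ v, ENNReal.ofReal (f τ v) * ENNReal.ofReal (Ψ τ (br v) / br v)) * M₂
      ≤ ENNReal.ofReal C * J := by
    rw [← lintegral_const_mul' _ _ ofReal_ne_top]
    refine lintegral_mono fun τ => ?_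
    calc _ = ENNReal.ofReal C *
          ∫⁻ v, ENNReal.ofReal (f τ v) * ENNReal.ofReal (Ψ τ (br v) / br v) := by rw [hCe]; ring
      _ ≤ _ := by
        gcongr with v
        exact div_le_self (hΨ0 τ v) (one_le_br v)
  have h1 : 2 * (∫⁻ v, ENNReal.ofReal (f T v) * ENNReal.ofReal (Ψ T (br v)))
      ≤ 2 * (∫⁻ v, ENNReal.ofReal (f 0 v) * ENNReal.ofReal (Ψ 0 (br v))) := by
    refine (ENNReal.add_le_add_iff_right hJfin).1 ?_
    rw [hDm] at hev
    refine le_trans ?_ (hev.trans ?_)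
    · exact add_le_add le_rfl ((le_mul_of_one_le_left' (by norm_num)).trans le_self_add)
    · simp only [ENNReal.ofReal_zero, mul_zero, lintegral_zero, zero_add]
      gcongr
  have h2 : (∫⁻ v, ENNReal.ofReal (f T v) * ENNReal.ofReal (Ψ T (br v)))
      ≤ ∫⁻ v, ENNReal.ofReal (f 0 v) * ENNReal.ofReal (Ψ 0 (br v)) :=
    (ENNReal.mul_le_mul_iff_right (by norm_num) (by norm_num)).1 h1
  have e1 : ∫⁻ v, ENNReal.ofReal (f T v) * ENNReal.ofReal (min (br v ^ a) (R * br v))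
      = ENNReal.ofReal (exp (C * T)) *
        ∫⁻ v, ENNReal.ofReal (f T v) * ENNReal.ofReal (Ψ T (br v)) := by
    rw [← lintegral_const_mul' _ _ ofReal_ne_top]
    refine lintegral_congr fun v => ?_
    have : min (br v ^ a) (R * br v) = exp (C * T) * Ψ T (br v) := by
      rw [hΨ]; simp only
      rw [← mul_assoc, ← Real.exp_add, add_neg_cancel, Real.exp_zero, one_mul]
    rw [this, ENNReal.ofReal_mul (exp_pos _).le]
    ring
  rw [e1]
  refine mul_le_mul_right (h2.trans (lintegral_mono fun v => ?_)) _
  gcongr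
  simp only [hΨ, mul_zero, neg_zero, Real.exp_zero, one_mul]
  exact min_le_left _ _

/-- A priori finiteness of the moments, from the truncated ones by Fatou. -/
lemma moment_growth (hN : 2 ≤ N) (hk : CollKernel N k δ cL B) (hB : B ≠ ⊤)
    (hκ : ∀ e : Rn N, ‖e‖ = 1 → ∫⁻ σ, ENNReal.ofReal (1 - ⟪e, σ⟫ ^ 2) ∂(sphMeas N) = κ)
    (hf : KinSol N k f M₀ M₂) (hcL : 0 ≤ cL) (ha : 1 ≤ a) :
    ∃ C : ℝ, 0 ≤ C ∧ ∀ T, 0 ≤ T →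
      ∫⁻ v, ENNReal.ofReal (f T v) * ENNReal.ofReal (br v ^ a)
        ≤ ENNReal.ofReal (exp (C * T)) *
          ∫⁻ v, ENNReal.ofReal (f 0 v) * ENNReal.ofReal (br v ^ a) := by
  obtain ⟨C, hC0, hC⟩ := trunc_growth hN hk hB hκ hf hcL ha
  refine ⟨C, hC0, fun T hT => ?_⟩
  have hlim : ∀ v : Rn N, Filter.liminf (fun n : ℕ => ENNReal.ofReal (f T v) *
      ENNReal.ofReal (min (br v ^ a) (n * br v))) Filter.atTop
        = ENNReal.ofReal (f T v) * ENNReal.ofReal (br v ^ a) := by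
    intro v
    refine (tendsto_const_nhds.congr' ?_).liminf_eq
    obtain ⟨n₀, hn₀⟩ := exists_nat_ge (br v ^ a)
    filter_upwards [Filter.eventually_ge_atTop n₀] with n hn
    rw [min_eq_left]
    have h1 : (n₀ : ℝ) ≤ n := by exact_mod_cast hn
    have h2 := one_le_br v
    have h3 : (0:ℝ) ≤ n := n.cast_nonneg
    nlinarith
  calc ∫⁻ v, ENNReal.ofReal (f T v) * ENNReal.ofReal (br v ^ a)
      = ∫⁻ v, Filter.liminf (fun n : ℕ => ENNReal.ofReal (f T v) *
          ENNReal.ofReal (min (br v ^ a) (n * br v))) Filter.atTop := by simp_rw [hlim]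
    _ ≤ Filter.liminf (fun n : ℕ => ∫⁻ v, ENNReal.ofReal (f T v) *
          ENNReal.ofReal (min (br v ^ a) (n * br v))) Filter.atTop := by
        refine lintegral_liminf_le fun n => meas_mul (hf.meas_t T) ?_
        have := (continuous_br (N := N)).measurable
        fun_prop
    _ ≤ _ := by
        refine Filter.liminf_le_of_le (by isBoundedDefault) fun b hb => ?_
        obtain ⟨n, hn⟩ := hb.exists
        exact hn.trans (hC T hT n n.cast_nonneg)

/-- The uniform-in-time moment bound for solutions with an abstract kernel. -/
theorem uniform_moment (hN : 2 ≤ N) (hk : CollKernel N k δ cL B) (hB : B ≠ ⊤)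
    (hκ : ∀ e : Rn N, ‖e‖ = 1 → ∫⁻ σ, ENNReal.ofReal (1 - ⟪e, σ⟫ ^ 2) ∂(sphMeas N) = κ)
    (hκ0 : κ ≠ 0) (hκt : κ ≠ ⊤) (hf : KinSol N k f M₀ M₂) (hM₀ : M₀ ≠ 0) (hcL : 0 < cL)
    (hδ0 : 0 ≤ δ) (hδ1 : δ < 1) (ha : 1 < a)
    (hM : ∫⁻ v, ENNReal.ofReal (f 0 v) * ENNReal.ofReal (br v ^ a) ≠ ⊤) :
    ∃ C : ℝ≥0∞, C ≠ ⊤ ∧ ∀ T, 0 ≤ T →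
      ∫⁻ v, ENNReal.ofReal (f T v) * ENNReal.ofReal (br v ^ a) ≤ C := by
  obtain ⟨C₁, hC₁, hgrow⟩ := moment_growth hN hk hB hκ hf hcL.le ha.le
  have hΛ : 2 * ENNReal.ofReal (2 ^ (a + 2 * δ)) * B * M₂ ≠ ⊤ :=
    ENNReal.mul_ne_top (ENNReal.mul_ne_top (ENNReal.mul_ne_top (by norm_num) ofReal_ne_top) hB)
      hf.energy_fin
  set Lam := (2 * ENNReal.ofReal (2 ^ (a + 2 * δ)) * B * M₂).toReal with hLam
  have hLam0 : 0 ≤ Lam := ENNReal.toReal_nonneg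
  have hLe : ENNReal.ofReal Lam = 2 * ENNReal.ofReal (2 ^ (a + 2 * δ)) * B * M₂ :=
    ENNReal.ofReal_toReal hΛ
  have hM₂0 : M₂ ≠ 0 := by
    intro h
    have hle : M₀ ≤ M₂ := by
      rw [← hf.mass 0 le_rfl, ← hf.energy 0 le_rfl]
      refine lintegral_mono fun v => le_mul_of_one_le_right' ?_
      rw [← ENNReal.ofReal_one]
      exact ENNReal.ofReal_le_ofReal (one_le_br v)
    exact hM₀ (le_antisymm (h ▸ hle) zero_le)
  have hsc : 0 < splitConst a / 8 * cL := by have := splitConst_pos ha; positivity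
  -- the constant of the coercive term, after bounding the negative moment from below
  set E := ENNReal.ofReal (splitConst a / 8 * cL) * κ * (M₀ * M₀ / M₂) with hE
  have hEt : E ≠ ⊤ := ENNReal.mul_ne_top (ENNReal.mul_ne_top ofReal_ne_top hκt)
    (ENNReal.div_ne_top (ENNReal.mul_ne_top hf.mass_fin hf.mass_fin) hM₂0)
  have hE0 : E ≠ 0 := by
    refine mul_ne_zero (mul_ne_zero ?_ hκ0) ?_
    · simpa using hsc
    · exact (ENNReal.div_pos (mul_ne_zero hM₀ hM₀) hf.energy_fin).ne'
  set lam := E.toReal with hlam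
  have hlam0 : 0 < lam := ENNReal.toReal_pos hE0 hEt
  have hlE : ENNReal.ofReal lam = E := ENNReal.ofReal_toReal hEt
  -- beyond `K` the error `Λ/x` is at most `(λ/2) x^{-δ}`, as `δ < 1`
  obtain ⟨K, hK1, hK⟩ : ∃ K : ℝ, 1 ≤ K ∧ ∀ x, K ≤ x → 2 * Lam / lam ≤ x ^ (1 - δ) := by
    have h := (tendsto_rpow_atTop (show 0 < 1 - δ by linarith)).eventually_ge_atTop (2 * Lam / lam)
    obtain ⟨K, hK⟩ := Filter.eventually_atTop.1 h
    exact ⟨max K 1, le_max_right _ _, fun x hx => hK x ((le_max_left _ _).trans hx)⟩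
  have hKA : 0 ≤ K ^ (a + 2 * δ) := rpow_nonneg (by linarith) _
  -- with this speed, twice the time derivative of the weight is at most half of the coercive term
  set c := lam / 8 with hc
  have hc0 : 0 < c := by positivity
  refine ⟨2 * (∫⁻ v, ENNReal.ofReal (f 0 v) * ENNReal.ofReal (br v ^ a))
    + ENNReal.ofReal (Lam * K ^ (a + 2 * δ)) * M₀ * ENNReal.ofReal (1 / c), ?_, fun T hT => ?_⟩
  · exact ENNReal.add_ne_top.2 ⟨ENNReal.mul_ne_top (by norm_num) hM,
      ENNReal.mul_ne_top (ENNReal.mul_ne_top ofReal_ne_top hf.mass_fin) ofReal_ne_top⟩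
  have hw := timeWeight_cut (T := T) (a := a) hδ0 hc0.le
  set Ψ : ℝ → ℝ → ℝ := fun t x => cutW a δ (c * (T - t)) x with hΨ
  have hθ : ∀ t ∈ Set.Ioc 0 T, 0 ≤ c * (T - t) := fun t ht =>
    mul_nonneg hc0.le (sub_nonneg.2 ht.2)
  have hΨ0 : ∀ t ∈ Set.Ioc 0 T, ∀ v : Rn N, 0 ≤ Ψ t (br v) := fun t ht v =>
    (isWeight_cutW hδ0 (hθ t ht)).nonneg _ (br_pos v).le
  have hfin : ∫⁻ τ in Set.Ioc 0 T, ∫⁻ v, ENNReal.ofReal (f τ v) * ENNReal.ofReal (Ψ τ (br v)) ≠ ⊤ := by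
    have hb : ∀ τ ∈ Set.Ioc 0 T, ∫⁻ v, ENNReal.ofReal (f τ v) * ENNReal.ofReal (Ψ τ (br v))
        ≤ ENNReal.ofReal (exp (C₁ * T)) *
          ∫⁻ v, ENNReal.ofReal (f 0 v) * ENNReal.ofReal (br v ^ a) := by
      intro τ hτ
      refine le_trans (lintegral_mono fun v => ?_) ((hgrow τ hτ.1.le).trans ?_)
      · exact mul_le_mul_right (ENNReal.ofReal_le_ofReal (cutW_le (one_le_br v) (hθ τ hτ))) _
      · gcongr; exact hτ.2
    refine ne_top_of_le_ne_top ?_ (setLIntegral_mono' measurableSet_Ioc hb)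
    rw [lintegral_const]
    exact ENNReal.mul_ne_top (ENNReal.mul_ne_top ofReal_ne_top hM) (measure_ne_top _ _)
  have hev := evolution hN hk hB hκ hf hcL.le hT ha.le (by linarith) hw hfin
  set J := ∫⁻ τ in Set.Ioc 0 T, ENNReal.ofReal lam *
      ∫⁻ v, ENNReal.ofReal (f τ v) * ENNReal.ofReal (Ψ τ (br v) * br v ^ (-δ)) with hJ
  have hJfin : J ≠ ⊤ := by
    rw [hJ, lintegral_const_mul' _ _ ofReal_ne_top]
    refine ENNReal.mul_ne_top ofReal_ne_top (ne_top_of_le_ne_top hfin ?_)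
    refine setLIntegral_mono' measurableSet_Ioc fun τ hτ => ?_
    gcongr with v
    exact mul_le_of_le_one_right (hΨ0 τ hτ v) (rpow_le_one_of_one_le_of_nonpos (one_le_br v) (by linarith))
  have hZ : J ≤ ∫⁻ τ in Set.Ioc 0 T, ENNReal.ofReal (splitConst a / 8 * cL) * κ
            * (∫⁻ w, ENNReal.ofReal (f τ w) * ENNReal.ofReal (br w)⁻¹)
            * (∫⁻ v, ENNReal.ofReal (f τ v) * ENNReal.ofReal (Ψ τ (br v) * br v ^ (-δ))) := by
    refine setLIntegral_mono' measurableSet_Ioc fun τ hτ => ?_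
    rw [hlE, hE]
    gcongr
    exact neg_moment_lower hf hM₀ hτ.1.le
  have hbr : Measurable fun p : ℝ × Rn N => (p.1, br p.2) :=
    measurable_fst.prodMk (continuous_br.measurable.comp measurable_snd)
  have mb := (continuous_br (N := N)).measurable
  have mf := hf.meas.ennreal_ofReal
  have mD : Measurable fun p : ℝ × Rn N => ENNReal.ofReal (f p.1 p.2) *
      ENNReal.ofReal (cutD a δ c (c * (T - p.1)) (br p.2)) :=
    meas_mul mf (hw.measDp.comp hbr).ennreal_ofReal
  have hR : 2 * (∫⁻ τ in Set.Ioc 0 T, ∫⁻ v, ENNReal.ofReal (f τ v) *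
        ENNReal.ofReal (cutD a δ c (c * (T - τ)) (br v)))
      + (∫⁻ τ in Set.Ioc 0 T, 2 * ENNReal.ofReal (2 ^ (a + 2 * δ)) * B
          * (∫⁻ v, ENNReal.ofReal (f τ v) * ENNReal.ofReal (Ψ τ (br v) / br v)) * M₂)
      ≤ J + ENNReal.ofReal (Lam * K ^ (a + 2 * δ)) * M₀ * ENNReal.ofReal (1 / c) := by
    rw [← lintegral_const_mul' _ _ (by norm_num),
      ← lintegral_add_left (mD.lintegral_prod_right'.const_mul 2)]
    calc _ ≤ ∫⁻ τ in Set.Ioc 0 T, (ENNReal.ofReal lam *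
          (∫⁻ v, ENNReal.ofReal (f τ v) * ENNReal.ofReal (Ψ τ (br v) * br v ^ (-δ)))
          + ENNReal.ofReal (Lam * K ^ (a + 2 * δ)) * M₀ *
            ENNReal.ofReal (1 / (1 + c * (T - τ)) ^ 2)) := by
          refine setLIntegral_mono' measurableSet_Ioc fun τ hτ => ?_
          have hθτ := hθ τ hτ
          have e1 : 2 * ENNReal.ofReal (2 ^ (a + 2 * δ)) * B
              * (∫⁻ v, ENNReal.ofReal (f τ v) * ENNReal.ofReal (Ψ τ (br v) / br v)) * M₂
              = ENNReal.ofReal Lam *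
                ∫⁻ v, ENNReal.ofReal (f τ v) * ENNReal.ofReal (Ψ τ (br v) / br v) := by
            rw [hLe]; ring
          have mDτ : Measurable fun v => ENNReal.ofReal (f τ v) *
              ENNReal.ofReal (cutD a δ c (c * (T - τ)) (br v)) := mD.comp measurable_prodMk_left
          have mZτ : Measurable fun v =>
              ENNReal.ofReal (f τ v) * ENNReal.ofReal (Ψ τ (br v) * br v ^ (-δ)) := by
            refine meas_mul (hf.meas_t τ) (Measurable.ennreal_ofReal ?_)
            exact (hw.measΨ.comp (measurable_const.prodMk mb)).mul (mb.pow_const _)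
          rw [e1, ← lintegral_const_mul' _ _ (by norm_num), ← lintegral_const_mul' _ _ ofReal_ne_top,
            ← lintegral_const_mul' _ _ ofReal_ne_top, ← lintegral_add_left (mDτ.const_mul 2),
            mul_right_comm, ← hf.mass τ hτ.1.le, ← lintegral_const_mul' _ _ (by finiteness),
            ← lintegral_add_left (mZτ.const_mul _)]
          refine lintegral_mono fun v => ?_
          have hx := one_le_br v
          have hD := cutD_nonneg (a := a) (δ := δ) hx hθτ hc0.le
          have hWv := hΨ0 τ hτ v
          have hn : 0 ≤ br v ^ (-δ) := rpow_nonneg (br_pos v).le _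
          have hq : 0 ≤ Ψ τ (br v) / br v := div_nonneg hWv (br_pos v).le
          have hx2 : 0 ≤ 1 / (1 + c * (T - τ)) ^ 2 := by positivity
          have h2 : (2 : ℝ≥0∞) = ENNReal.ofReal 2 := by norm_num
          have key := cut_absorb (by linarith : (0:ℝ) ≤ a) hδ0 hlam0 hLam0 hK1 hK hx hθτ
          calc 2 * (ENNReal.ofReal (f τ v) * ENNReal.ofReal (cutD a δ c (c * (T - τ)) (br v)))
                + ENNReal.ofReal Lam * (ENNReal.ofReal (f τ v) * ENNReal.ofReal (Ψ τ (br v) / br v))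
              = ENNReal.ofReal (f τ v) * ENNReal.ofReal
                (2 * cutD a δ c (c * (T - τ)) (br v) + Lam * (Ψ τ (br v) / br v)) := by
                rw [ENNReal.ofReal_add (by positivity) (by positivity),
                  ENNReal.ofReal_mul (by norm_num), ENNReal.ofReal_mul hLam0, ← h2]
                ring
            _ ≤ ENNReal.ofReal (f τ v) * ENNReal.ofReal (lam * (Ψ τ (br v) * br v ^ (-δ))
                + Lam * K ^ (a + 2 * δ) * (1 / (1 + c * (T - τ)) ^ 2)) :=
                mul_le_mul_right (ENNReal.ofReal_le_ofReal key) _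
            _ = _ := by
                rw [ENNReal.ofReal_add (by positivity) (by positivity),
                  ENNReal.ofReal_mul hlam0.le, ENNReal.ofReal_mul (mul_nonneg hLam0 hKA)]
                ring
      _ = J + ENNReal.ofReal (Lam * K ^ (a + 2 * δ)) * M₀ *
            ∫⁻ τ in Set.Ioc 0 T, ENNReal.ofReal (1 / (1 + c * (T - τ)) ^ 2) := by
          rw [lintegral_add_right _ (by fun_prop),
            lintegral_const_mul' _ _ (ENNReal.mul_ne_top ofReal_ne_top hf.mass_fin)]
      _ ≤ _ := by gcongr; exact integral_tail hc0 hT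
  have hXT : ∫⁻ v, ENNReal.ofReal (f T v) * ENNReal.ofReal (Ψ T (br v))
      = ∫⁻ v, ENNReal.ofReal (f T v) * ENNReal.ofReal (br v ^ a) := by
    refine lintegral_congr fun v => ?_
    simp only [hΨ, sub_self, mul_zero, cutW_zero (one_le_br v)]
  have hX0 : ∫⁻ v, ENNReal.ofReal (f 0 v) * ENNReal.ofReal (Ψ 0 (br v))
      ≤ ∫⁻ v, ENNReal.ofReal (f 0 v) * ENNReal.ofReal (br v ^ a) := by
    refine lintegral_mono fun v => mul_le_mul_right (ENNReal.ofReal_le_ofReal ?_) _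
    exact cutW_le (one_le_br v) (mul_nonneg hc0.le (by linarith))
  rw [hXT] at hev
  refine (ENNReal.add_le_add_iff_right hJfin).1 ?_
  calc _ ≤ 2 * (∫⁻ v, ENNReal.ofReal (f T v) * ENNReal.ofReal (br v ^ a))
        + (2 * (∫⁻ τ in Set.Ioc 0 T, ∫⁻ v, ENNReal.ofReal (f τ v) * ENNReal.ofReal (0:ℝ)) + J) := by
        refine add_le_add (le_mul_of_one_le_left' (by norm_num)) le_add_self
    _ ≤ _ := le_trans (by gcongr) hev
    _ ≤ 2 * (∫⁻ v, ENNReal.ofReal (f 0 v) * ENNReal.ofReal (br v ^ a)) + _ :=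
        add_le_add (mul_le_mul_right hX0 _) hR
    _ = _ := by ring

end

/-! ### The theorem -/

lemma L1s_eq {N : ℕ} (s : ℝ) {g : Rn N → ℝ} (hg : ∀ v, 0 ≤ g v) :
    L1s N s g = ∫⁻ v, ENNReal.ofReal (g v) * ENNReal.ofReal (br v ^ (s / 2)) := by
  unfold L1s
  refine lintegral_congr fun v => ?_
  rw [abs_of_nonneg (hg v), ENNReal.ofReal_mul (hg v), br]

lemma initial_eq {N : ℕ} {Φ b : ℝ → ℝ} {f : ℝ → Rn N → ℝ} {fIn : Rn N → ℝ}
    (hf : IsSolution N Φ b f fIn) : f 0 = fIn := by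
  funext v
  simpa using hf.eqn 0 le_rfl v

/-- A solution in the original sense, in terms of the nonnegative kernel built from a Borel version `b'`
of `b`. -/
lemma kinSol_of_isSolution {N : ℕ} [IsFiniteMeasure (sphMeas N)] {Φ b b' : ℝ → ℝ}
    {f : ℝ → Rn N → ℝ} {fIn : Rn N → ℝ} (hf : IsSolution N Φ b f fIn)
    (hΦ : Continuous Φ) (hb' : Measurable b') (hpos : ∀ (z : Rn N) x, 0 ≤ Φ ‖z‖ * b' x)
    (hbb : ∀ u : Rn N, ‖u‖ = 1 → ∀ᵐ σ ∂(sphMeas N), b ⟪u, σ⟫ = b' ⟪u, σ⟫) :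
    KinSol N (kerE N Φ b') f (ENNReal.ofReal (∫ v, fIn v))
      (ENNReal.ofReal ((∫ v, fIn v) + ∫ v, fIn v * ‖v‖ ^ 2)) := by
  have mt : ∀ t, Measurable (f t) := fun t => hf.meas.comp measurable_prodMk_left
  have hE : ∀ t, 0 ≤ t → ∫⁻ v, ENNReal.ofReal (f t v * br v) < ⊤ := by
    intro t ht
    have h := hf.mem_L1_2 t ht
    rw [L1s_eq 2 (hf.nonneg t)] at h
    refine lt_of_eq_of_lt (lintegral_congr fun v => ?_) h
    rw [ENNReal.ofReal_mul (hf.nonneg t v)]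
    norm_num
  have iE : ∀ t, 0 ≤ t → Integrable fun v => f t v * br v := fun t ht =>
    ⟨((mt t).mul continuous_br.measurable).aestronglyMeasurable, by
      rw [hasFiniteIntegral_iff_ofReal
        (Filter.Eventually.of_forall fun v => mul_nonneg (hf.nonneg t v) (br_pos v).le)]
      exact hE t ht⟩
  have i1 : ∀ t, 0 ≤ t → Integrable (f t) := fun t ht =>
    (iE t ht).mono' (mt t).aestronglyMeasurable (Filter.Eventually.of_forall fun v => by
      rw [Real.norm_of_nonneg (hf.nonneg t v)]
      exact le_mul_of_one_le_right (hf.nonneg t v) (one_le_br v))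
  have i2 : ∀ t, 0 ≤ t → Integrable fun v => f t v * ‖v‖ ^ 2 := fun t ht => by
    have h := (iE t ht).sub (i1 t ht)
    refine h.congr (Filter.Eventually.of_forall fun v => ?_)
    simp only [Pi.sub_apply, br]; ring
  refine ⟨hf.nonneg, hf.meas, fun t ht => ?_, fun t ht => ?_, ofReal_ne_top, ofReal_ne_top,
    fun τ v => Qop N Φ b (f τ) (f τ) v, fun t ht v => ?_, fun t _ v h1 h2 => ?_⟩
  · rw [← hf.mass t ht,
      ofReal_integral_eq_lintegral_ofReal (i1 t ht) (Filter.Eventually.of_forall (hf.nonneg t))]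
  · have iS : Integrable fun v => f t v + f t v * ‖v‖ ^ 2 := (i1 t ht).add (i2 t ht)
    rw [← hf.mass t ht, ← hf.energy t ht, ← integral_add (i1 t ht) (i2 t ht),
      ofReal_integral_eq_lintegral_ofReal iS
        (Filter.Eventually.of_forall fun v =>
          add_nonneg (hf.nonneg t v) (mul_nonneg (hf.nonneg t v) (sq_nonneg _)))]
    refine lintegral_congr fun v => ?_
    rw [← ENNReal.ofReal_mul (hf.nonneg t v), br]
    congr 1; ring
  · rw [initial_eq hf]; exact hf.eqn t ht v
  · simp only
    rw [Qop_congr_b hbb]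
    exact Qop_eq hΦ hb' hpos (mt t) (hf.nonneg t) v h1 h2

/-- **Theorem 1.1 (i)** (Desvillettes–Mouhot): uniform-in-time moment bounds for
mollified soft potentials.  For `s > 2` there is `q₀ > 0` such that any solution with initial
datum in `L¹_{2s} ∩ L²_{q₀}` has its `L¹_s` norm bounded uniformly in time. -/
theorem uniform_in_time_moment_bound
    (N : ℕ) (hN : 2 ≤ N) (s : ℝ) (hs : 2 < s)
    (Φ b : ℝ → ℝ) (γ : ℝ) (hK : KernelOK N Φ b γ) :
    ∃ q₀ : ℝ, 0 < q₀ ∧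
      ∀ (fIn : Rn N → ℝ) (f : ℝ → Rn N → ℝ),
        (∀ v, 0 ≤ fIn v) → L1s N (2 * s) fIn < ⊤ → L2s N q₀ fIn < ⊤ →
        IsSolution N Φ b f fIn →
        ∃ C : ℝ, 0 < C ∧ ∀ t : ℝ, 0 ≤ t → L1s N s (f t) ≤ ENNReal.ofReal C := by
  refine ⟨1, one_pos, fun fIn f hIn h2s _ hf => ?_⟩
  suffices h : ∃ C : ℝ≥0∞, C ≠ ⊤ ∧ ∀ t : ℝ, 0 ≤ t → L1s N s (f t) ≤ C by
    obtain ⟨C, hC, h⟩ := h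
    refine ⟨C.toReal + 1, by positivity, fun t ht => (h t ht).trans ?_⟩
    rw [← ENNReal.ofReal_toReal hC]
    exact ENNReal.ofReal_le_ofReal (by simp)
  have hs0 : L1s N s fIn ≠ ⊤ := by
    refine ne_top_of_le_ne_top h2s.ne ?_
    rw [L1s_eq s hIn, L1s_eq (2 * s) hIn]
    refine lintegral_mono fun v => mul_le_mul_right (ENNReal.ofReal_le_ofReal ?_) _
    exact rpow_le_rpow_of_exponent_le (one_le_br v) (by linarith)
  rcases eq_or_ne (sphMeas N) 0 with hS | hS
  · -- without collisions the solution is stationary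
    refine ⟨L1s N s fIn, hs0, fun t ht => le_of_eq ?_⟩
    congr 1
    funext v
    rw [hf.eqn t ht v]
    simp [Qop, hS]
  have := sphMeas_finite hN hK
  obtain ⟨b₀, hb₀, hb⟩ := hK.b_pos
  obtain ⟨b', mb', hb', hbb⟩ := exists_measurable_b hb hK.b_integrable
  have hK' : KernelOK N Φ b' γ :=
    ⟨hK.gamma_mem, hK.phi_smooth, hK.phi_bounds, hK.phi_deriv_bounds, ⟨b₀, hb₀, hb'⟩,
      fun u hu => (hK.b_integrable u hu).congr (hbb u hu)⟩
  obtain ⟨cL, hcL, B, hB, hk⟩ := collKernel_kerE hN hK' mb'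
  obtain ⟨κ, hκ0, hκt, hκ⟩ := exists_kappa hN hS
  have hpos : ∀ (z : Rn N) x, 0 ≤ Φ ‖z‖ * b' x := by
    obtain ⟨cΦ, CΦ, hc, _, hΦ⟩ := hK.phi_bounds
    intro z x
    exact mul_nonneg (le_trans (by positivity) (hΦ z).1) (hb₀.le.trans (hb' x))
  have hsol := kinSol_of_isSolution hf hK.phi_smooth.continuous mb' hpos hbb
  rcases eq_or_ne (ENNReal.ofReal (∫ v, fIn v)) 0 with h0 | h0
  · -- zero mass: the solution vanishes almost everywhere
    refine ⟨0, ENNReal.zero_ne_top, fun t ht => le_of_eq ?_⟩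
    have h := hsol.mass t ht
    rw [h0, lintegral_eq_zero_iff (hsol.meas_t t)] at h
    rw [L1s_eq s (hf.nonneg t)]
    refine (lintegral_congr_ae ?_).trans lintegral_zero
    filter_upwards [h] with v hv
    rw [hv]; simp
  have hγ := hK.gamma_mem
  obtain ⟨C, hC, h⟩ := uniform_moment (a := s / 2) hN hk hB hκ hκ0 hκt hsol h0 hcL
    (by linarith [hγ.2]) (by linarith [hγ.1]) (by linarith) (by
      rw [initial_eq hf, ← L1s_eq s hIn]; exact hs0)
  exact ⟨C, hC, fun t ht => by rw [L1s_eq s (hf.nonneg t)]; exact h t ht⟩
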